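/- arXiv:1810.06170 — 3 statements merged into one kernel-verified Lean document; each statement's English description precedes it below -/
import Mathlib

section
/- Let s_n be the number of walks of length n with steps in {(1,1),(−1,1),(0,−1)} (the model NE, NW, S), beginning at the origin and confined to ℕ². Then there is a constant c > 0 such that for all n ≥ 1, | s_n · 3^{−n} · n^{1/2} − √3/(2√π) | ≤ c/n; that is, s_n = 3^n n^{−1/2} ( √3/(2√π) + O(1/n) ). -/
open Finset

/-- The number of walks of length `n` with steps in the set `S ⊆ ℤ^d`, beginning at
the origin and confined to the non-negative orthant `ℕ^d`. -/
noncomputable def walkCount (d : ℕ) (S : Set (Fin d → ℤ)) (n : ℕ) : ℕ :=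
  Nat.card {u : Fin n → (Fin d → ℤ) //
    (∀ k : Fin n, u k ∈ S) ∧
    ∀ k : Fin n, ∀ m : Fin d, 0 ≤ ∑ j ∈ Finset.Iic k, u j m}

/-! ### Part 1: exact enumeration -/

def stepSet : Set (Fin 2 → ℤ) := {![1, 1], ![-1, 1], ![0, -1]}

/-- Walks of length `n` starting at `p`. -/
def walkSet (n : ℕ) (p : Fin 2 → ℤ) : Set (Fin n → Fin 2 → ℤ) :=
  {u | (∀ k, u k ∈ stepSet) ∧ ∀ k : Fin n, ∀ m, 0 ≤ p m + ∑ j ∈ Finset.Iic k, u j m}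

lemma sum_Iic_succ_cons {n : ℕ} (s : Fin 2 → ℤ) (u : Fin n → Fin 2 → ℤ) (k : Fin n) (m : Fin 2) :
    ∑ j ∈ Finset.Iic k.succ, (Fin.cons s u : Fin (n+1) → Fin 2 → ℤ) j m
      = s m + ∑ j ∈ Finset.Iic k, u j m := by
  have h1 : ∀ (N : ℕ) (k : Fin N), Finset.Iic k = Finset.univ.filter (fun j => j ≤ k) := by
    intro N k; ext j; simp
  rw [h1, h1, Finset.sum_filter, Finset.sum_filter, Fin.sum_univ_succ]
  simp

lemma sum_Iic_zero_cons {n : ℕ} (s : Fin 2 → ℤ) (u : Fin n → Fin 2 → ℤ) (m : Fin 2) :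
    ∑ j ∈ Finset.Iic (0 : Fin (n+1)), (Fin.cons s u : Fin (n+1) → Fin 2 → ℤ) j m = s m := by
  have h1 : Finset.Iic (0 : Fin (n+1)) = {0} := by
    ext j; simp
  rw [h1]; simp

lemma cons_mem_walkSet {n : ℕ} (p s : Fin 2 → ℤ) (u : Fin n → Fin 2 → ℤ) :
    (Fin.cons s u : Fin (n+1) → Fin 2 → ℤ) ∈ walkSet (n+1) p ↔
      s ∈ stepSet ∧ (∀ m, 0 ≤ p m + s m) ∧ u ∈ walkSet n (p + s) := by
  simp only [walkSet, Set.mem_ofPred_eq, Fin.forall_fin_succ (n := n), sum_Iic_succ_cons,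
    sum_Iic_zero_cons, Fin.cons_zero, Fin.cons_succ, Pi.add_apply, add_assoc]
  tauto

lemma walkSet_succ (n : ℕ) (p : Fin 2 → ℤ) :
    walkSet (n+1) p = ⋃ s ∈ stepSet, (fun u : Fin n → Fin 2 → ℤ =>
      (Fin.cons s u : Fin (n+1) → Fin 2 → ℤ)) ''
        {u | (∀ m, 0 ≤ p m + s m) ∧ u ∈ walkSet n (p + s)} := by
  ext v
  simp only [Set.mem_iUnion, Set.mem_image, Set.mem_ofPred_eq]
  constructor
  · intro hv
    have := Fin.cons_self_tail v
    rw [← this, cons_mem_walkSet] at hv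
    exact ⟨v 0, hv.1, Fin.tail v, hv.2, this⟩
  · rintro ⟨s, hs, u, hu, rfl⟩
    exact (cons_mem_walkSet p s u).2 ⟨hs, hu⟩

lemma walkSet_finite (n : ℕ) (p : Fin 2 → ℤ) : (walkSet n p).Finite := by
  induction n generalizing p with
  | zero => exact Set.toFinite _
  | succ n ih =>
    rw [walkSet_succ]
    refine Set.Finite.biUnion (by simp [stepSet]) ?_
    intro s _
    exact ((ih (p + s)).subset (fun u hu => hu.2)).image _

/-- the number of walks, zero if the start is outside of the quadrant -/
noncomputable def wcnt (n : ℕ) (i j : ℤ) : ℤ :=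
  if 0 ≤ i ∧ 0 ≤ j then ((walkSet n ![i, j]).ncard : ℤ) else 0

lemma ncard_piece (n : ℕ) (i j a b : ℤ) :
    ((((fun u : Fin n → Fin 2 → ℤ =>
      (Fin.cons ![a, b] u : Fin (n+1) → Fin 2 → ℤ)) ''
        {u | (∀ m, 0 ≤ (![i, j] : Fin 2 → ℤ) m + (![a, b] : Fin 2 → ℤ) m) ∧
          u ∈ walkSet n (![i, j] + ![a, b])}).ncard : ℕ) : ℤ) = wcnt n (i + a) (j + b) := by
  have hinj : Function.Injective (fun u : Fin n → Fin 2 → ℤ =>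
      (Fin.cons ![a, b] u : Fin (n+1) → Fin 2 → ℤ)) := fun x y h =>
    Fin.cons_right_injective (α := fun _ => Fin 2 → ℤ) _ h
  rw [Set.ncard_image_of_injective _ hinj]
  have h : (![i, j] : Fin 2 → ℤ) + ![a, b] = ![i + a, j + b] := by simp
  rw [h]
  unfold wcnt
  split_ifs with hc
  · simp [Fin.forall_fin_two, hc]
  · simp [Fin.forall_fin_two, hc]

lemma wcnt_succ (n : ℕ) (i j : ℤ) (hi : 0 ≤ i) (hj : 0 ≤ j) :
    wcnt (n+1) i j = wcnt n (i+1) (j+1) + wcnt n (i-1) (j+1) + wcnt n i (j-1) := by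
  have e1 := ncard_piece n i j 1 1
  have e2 := ncard_piece n i j (-1) 1
  have e3 := ncard_piece n i j 0 (-1)
  rw [← sub_eq_add_neg] at e2 e3
  rw [add_zero] at e3
  rw [← e1, ← e2, ← e3]
  rw [wcnt, if_pos ⟨hi, hj⟩, walkSet_succ]
  simp only [stepSet, Set.biUnion_insert, Set.biUnion_singleton]
  have fin : ∀ a b : ℤ, ((fun u : Fin n → Fin 2 → ℤ =>
      (Fin.cons ![a, b] u : Fin (n+1) → Fin 2 → ℤ)) ''
        {u | (∀ m, 0 ≤ (![i, j] : Fin 2 → ℤ) m + (![a, b] : Fin 2 → ℤ) m) ∧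
          u ∈ walkSet n (![i, j] + ![a, b])}).Finite := fun a b =>
    ((walkSet_finite n _).subset (fun u hu => hu.2)).image _
  have disj : ∀ (s t : Fin 2 → ℤ) (A B : Set (Fin n → Fin 2 → ℤ)), s ≠ t →
      Disjoint ((fun u : Fin n → Fin 2 → ℤ => (Fin.cons s u : Fin (n+1) → Fin 2 → ℤ)) '' A)
        ((fun u : Fin n → Fin 2 → ℤ => (Fin.cons t u : Fin (n+1) → Fin 2 → ℤ)) '' B) := by
    intro s t A B hst
    rw [Set.disjoint_left]
    rintro v ⟨x, _, rfl⟩ ⟨y, _, h⟩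
    have := congrFun h 0
    simp only [Fin.cons_zero] at this
    exact hst this.symm
  rw [Set.ncard_union_eq _ (fin _ _) ((fin _ _).union (fin _ _)),
    Set.ncard_union_eq _ (fin _ _) (fin _ _)]
  · push_cast; ring
  · apply disj; intro h; have := congrFun h 0; simp at this
  · rw [Set.disjoint_union_right]
    constructor
    · apply disj; intro h; have := congrFun h 0; simp at this
    · apply disj; intro h; have := congrFun h 0; simp at this

lemma wcnt_zero (i j : ℤ) (hi : 0 ≤ i) (hj : 0 ≤ j) : wcnt 0 i j = 1 := by
  rw [wcnt, if_pos ⟨hi, hj⟩]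
  have : walkSet 0 ![i, j] = Set.univ := by
    ext u; simp [walkSet]
  rw [this]; simp [Set.ncard_univ]

lemma walkCount_eq (n : ℕ) :
    (walkCount 2 {![1, 1], ![-1, 1], ![0, -1]} n : ℤ) = wcnt n 0 0 := by
  rw [wcnt, if_pos ⟨le_rfl, le_rfl⟩, walkCount]
  have : walkSet n ![0, 0] = {u : Fin n → (Fin 2 → ℤ) |
    (∀ k : Fin n, u k ∈ ({![1, 1], ![-1, 1], ![0, -1]} : Set (Fin 2 → ℤ))) ∧
    ∀ k : Fin n, ∀ m : Fin 2, 0 ≤ ∑ j ∈ Finset.Iic k, u j m} := by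
    ext u
    simp [walkSet, stepSet, Fin.forall_fin_two]
  rw [this]
  rfl

/-- binomial coefficients with an integer lower index -/
def ichoose (n : ℕ) (k : ℤ) : ℤ := if k < 0 then 0 else (n.choose k.toNat : ℤ)

lemma ichoose_succ (n : ℕ) (k : ℤ) : ichoose (n+1) k = ichoose n k + ichoose n (k-1) := by
  unfold ichoose
  rcases lt_trichotomy k 0 with h | h | h
  · simp [h, show k - 1 < 0 by omega]
  · subst h; simp
  · obtain ⟨m, rfl⟩ : ∃ m : ℕ, k = m + 1 := ⟨(k-1).toNat, by omega⟩
    have h1 : ((m:ℤ) + 1).toNat = m + 1 := by omega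
    have h2 : ((m:ℤ) + 1 - 1).toNat = m := by omega
    rw [if_neg (by omega), if_neg (by omega), if_neg (by omega), h1, h2, Nat.choose_succ_succ]
    push_cast; ring

def psum (m : ℕ) (z : ℤ) : ℤ := ∑ d ∈ range (z + 1).toNat, (m.choose d : ℤ)

lemma psum_sub (m : ℕ) (z : ℤ) : psum m z - psum m (z - 1) = ichoose m z := by
  unfold psum ichoose
  split_ifs with h
  · rw [show (z+1).toNat = 0 by omega, show (z-1+1).toNat = 0 by omega]; simp
  · rw [show (z+1).toNat = z.toNat + 1 by omega, show (z-1+1).toNat = z.toNat by omega,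
      sum_range_succ]; ring

lemma psum_neg (m : ℕ) (z : ℤ) (h : z < 0) : psum m z = 0 := by
  unfold psum; rw [show (z+1).toNat = 0 by omega]; simp

lemma psum_zero (z : ℤ) (h : 0 ≤ z) : psum 0 z = 1 := by
  unfold psum
  rw [show (z+1).toNat = z.toNat + 1 by omega, sum_range_succ']
  simp

lemma psum_succ (m : ℕ) (z : ℤ) : psum (m+1) z = psum m z + psum m (z-1) := by
  by_cases h : z < 0
  · rw [psum_neg _ _ h, psum_neg _ _ h, psum_neg _ _ (by omega)]; rfl
  · obtain ⟨k, rfl⟩ : ∃ k : ℕ, z = k := ⟨z.toNat, by omega⟩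
    clear h
    induction k with
    | zero => simp [psum]
    | succ k ih =>
      have a1 := psum_sub (m+1) ((k+1 : ℕ) : ℤ)
      have a2 := psum_sub m ((k+1 : ℕ) : ℤ)
      have a3 := psum_sub m (((k+1 : ℕ) : ℤ) - 1)
      rw [ichoose_succ] at a1
      have e : (((k+1 : ℕ) : ℤ) - 1) = k := by push_cast; ring
      rw [e] at a1 a2 a3 ⊢
      linarith

/-- one-dimensional walks in the half line starting at `i`. -/
def Acnt (m : ℕ) (i : ℤ) : ℤ := psum m ((m + i) / 2) - psum m ((m + i) / 2 - i - 1)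

lemma Acnt_succ (m : ℕ) (i : ℤ) : Acnt (m+1) i = Acnt m (i+1) + Acnt m (i-1) := by
  unfold Acnt
  have e1 : ((m:ℤ) + (i + 1)) / 2 = ((m + 1 : ℕ) + i) / 2 := by push_cast; congr 1; ring
  have e2 : ((m:ℤ) + (i - 1)) / 2 = ((m + 1 : ℕ) + i) / 2 - 1 := by push_cast; omega
  rw [e1, e2]
  generalize (((m + 1 : ℕ) : ℤ) + i) / 2 = z
  rw [psum_succ, psum_succ]
  rw [show z - i - 1 - 1 = z - (i+1) - 1 by ring, show z - 1 - (i - 1) - 1 = z - i - 1 by ring]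
  ring

lemma Acnt_neg_one (m : ℕ) : Acnt m (-1) = 0 := by
  unfold Acnt; simp

lemma Acnt_zero (i : ℤ) (hi : 0 ≤ i) : Acnt 0 i = 1 := by
  unfold Acnt
  rw [psum_zero _ (by push_cast; omega), psum_neg _ _ (by push_cast; omega)]; rfl

def Bcnt (n : ℕ) (k j : ℤ) : ℤ := if 2 * k ≤ n + j then ichoose n k - ichoose n (k - j - 1) else 0

lemma Bcnt_succ (n : ℕ) (k j : ℤ) : Bcnt (n+1) k j = Bcnt n k (j+1) + Bcnt n (k-1) (j-1) := by
  unfold Bcnt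
  by_cases h : 2 * k ≤ ((n+1 : ℕ) : ℤ) + j
  · rw [if_pos h, if_pos (by push_cast at h; omega), if_pos (by push_cast at h; omega)]
    rw [ichoose_succ, ichoose_succ]
    rw [show k - j - 1 - 1 = k - (j+1) - 1 by ring, show k - 1 - (j - 1) - 1 = k - j - 1 by ring]
    ring
  · rw [if_neg h, if_neg (by push_cast at h; omega), if_neg (by push_cast at h; omega)]; rfl

lemma Bcnt_neg_one (n : ℕ) (k : ℤ) : Bcnt n k (-1) = 0 := by
  unfold Bcnt; simp

lemma Bcnt_neg (n : ℕ) (k j : ℤ) (hk : k < 0) (hj : -1 ≤ j) : Bcnt n k j = 0 := by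
  unfold Bcnt ichoose
  rw [if_pos hk, if_pos (show k - j - 1 < 0 by omega)]; simp

lemma Bcnt_large (n : ℕ) (j : ℤ) : Bcnt n (n+1) j = 0 := by
  unfold Bcnt
  split_ifs with h
  · unfold ichoose
    rw [if_neg (by omega), if_pos (by omega), Nat.choose_eq_zero_of_lt (by omega)]; rfl
  · rfl

def Gcnt (n : ℕ) (i j : ℤ) : ℤ := ∑ k ∈ range (n+1), Bcnt n k j * Acnt (n - k) i

lemma Gcnt_succ (n : ℕ) (i j : ℤ) (hj : 0 ≤ j) :
    Gcnt (n+1) i j = Gcnt n (i+1) (j+1) + Gcnt n (i-1) (j+1) + Gcnt n i (j-1) := by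
  have h1 : Gcnt (n+1) i j = ∑ k ∈ range (n+1+1), Bcnt n k (j+1) * Acnt (n + 1 - k) i
      + ∑ k ∈ range (n+1+1), Bcnt n ((k:ℤ)-1) (j-1) * Acnt (n + 1 - k) i := by
    unfold Gcnt
    rw [← sum_add_distrib]
    refine sum_congr rfl fun k _ => ?_
    rw [Bcnt_succ]; ring
  rw [h1, sum_range_succ, sum_range_succ' (fun k : ℕ => Bcnt n ((k:ℤ)-1) (j-1) * Acnt (n + 1 - k) i)]
  rw [show (((n + 1 : ℕ)) : ℤ) = n + 1 by push_cast; ring, Bcnt_large,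
    Bcnt_neg n _ (j-1) (by simp) (by omega)]
  unfold Gcnt
  have h2 : ∑ k ∈ range (n+1), Bcnt n k (j+1) * Acnt (n + 1 - k) i =
      ∑ k ∈ range (n+1), Bcnt n k (j+1) * Acnt (n - k) (i+1)
      + ∑ k ∈ range (n+1), Bcnt n k (j+1) * Acnt (n - k) (i-1) := by
    rw [← sum_add_distrib]
    refine sum_congr rfl fun k hk => ?_
    have hk' : k ≤ n := by simpa [Nat.lt_succ_iff] using hk
    rw [show n + 1 - k = (n - k) + 1 by omega, Acnt_succ]; ring
  rw [h2]
  simp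

lemma wcnt_eq_Gcnt (n : ℕ) (i j : ℤ) (hi : -1 ≤ i) (hj : -1 ≤ j) : wcnt n i j = Gcnt n i j := by
  by_cases h : 0 ≤ i ∧ 0 ≤ j
  · obtain ⟨hi, hj⟩ := h
    induction n generalizing i j with
    | zero =>
      rw [wcnt_zero i j hi hj]
      simp [Gcnt, Acnt_zero i hi, Bcnt, hj, ichoose, show -j < 1 by omega]
    | succ n ih =>
      rw [wcnt_succ n i j hi hj, Gcnt_succ n i j hj]
      have key : ∀ i j : ℤ, -1 ≤ i → -1 ≤ j → wcnt n i j = Gcnt n i j := by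
        intro i j hi hj
        by_cases h : 0 ≤ i ∧ 0 ≤ j
        · exact ih i j hi hj h.1 h.2
        · rw [wcnt, if_neg h]
          have : i = -1 ∨ j = -1 := by omega
          unfold Gcnt
          rcases this with rfl | rfl
          · simp [Acnt_neg_one]
          · simp [Bcnt_neg_one]
      rw [key _ _ (by omega) (by omega), key _ _ (by omega) (by omega),
        key _ _ (by omega) (by omega)]
  · rw [wcnt, if_neg h]
    have : i = -1 ∨ j = -1 := by omega
    unfold Gcnt
    rcases this with rfl | rfl
    · simp [Acnt_neg_one]
    · simp [Bcnt_neg_one]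

/-- `C(m, ⌊m/2⌋)`. -/
def mid (m : ℕ) : ℕ := m.choose (m / 2)

lemma Acnt_mid (m : ℕ) : Acnt m 0 = mid m := by
  unfold Acnt
  rw [add_zero, sub_zero, psum_sub, ichoose, if_neg (by omega)]
  rw [show ((m:ℤ)/2).toNat = m / 2 by omega]; rfl

lemma walkCount_formula (n : ℕ) :
    (walkCount 2 {![1, 1], ![-1, 1], ![0, -1]} n : ℤ) =
      ∑ k ∈ range (n+1), (if 2 * k ≤ n then ichoose n k - ichoose n ((k:ℤ) - 1) else 0)
        * (mid (n - k) : ℤ) := by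
  rw [walkCount_eq, wcnt_eq_Gcnt _ _ _ (by omega) (by omega), Gcnt]
  refine sum_congr rfl fun k _ => ?_
  rw [Acnt_mid, Bcnt]
  have : (2 * (k:ℤ) ≤ n + 0) ↔ 2 * k ≤ n := by omega
  simp only [this, sub_zero]

/-! ### Part 2: asymptotics -/

/-- Differences of the central binomial coefficients. -/
def hdiff (m : ℕ) : ℤ := if m = 0 then 1 else (mid m : ℤ) - mid (m - 1)

lemma ichoose_nat (n k : ℕ) : ichoose n (k : ℤ) = n.choose k := by
  unfold ichoose; rw [if_neg (by omega)]; simp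

lemma full_sum (n : ℕ) :
    ∑ k ∈ range (n+1), (ichoose n k - ichoose n ((k:ℤ) - 1)) * (mid (n - k) : ℤ)
      = ∑ m ∈ range (n+1), (n.choose m : ℤ) * hdiff m := by
  have h0 : ∑ m ∈ range (n+1), (n.choose m : ℤ) * hdiff m
      = ∑ k ∈ range (n+1), (n.choose k : ℤ) * hdiff (n - k) := by
    rw [← sum_range_reflect]
    refine sum_congr rfl fun k hk => ?_
    have hk' : k ≤ n := by simpa [Nat.lt_succ_iff] using hk
    rw [show n + 1 - 1 - k = n - k by omega, Nat.choose_symm hk']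
  rw [h0]
  simp only [sub_mul, sum_sub_distrib]
  rw [sum_range_succ' (fun k : ℕ => ichoose n ((k:ℤ) - 1) * (mid (n - k) : ℤ)),
    sum_range_succ, sum_range_succ (fun k : ℕ => (n.choose k : ℤ) * hdiff (n - k))]
  have h1 : ichoose n (((0:ℕ):ℤ) - 1) = 0 := by simp [ichoose]
  rw [h1, zero_mul, add_zero, add_sub_right_comm, ← sum_sub_distrib]
  congr 1
  · refine sum_congr rfl fun k hk => ?_
    have hk' : k < n := by simpa using hk
    rw [show ((k+1 : ℕ) : ℤ) - 1 = k by push_cast; ring, ichoose_nat, hdiff, if_neg (by omega),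
      show n - k - 1 = n - (k+1) by omega]
    ring
  · simp [ichoose_nat, hdiff, mid]

lemma tail_bound (n : ℕ) :
    |(walkCount 2 {![1, 1], ![-1, 1], ![0, -1]} n : ℝ) -
      ∑ m ∈ range (n+1), (n.choose m : ℝ) * (hdiff m : ℝ)| ≤ (n+1) * (2 ^ n * Real.sqrt 2 ^ n) := by
  have e1 : (walkCount 2 {![1, 1], ![-1, 1], ![0, -1]} n : ℝ) =
      ((walkCount 2 {![1, 1], ![-1, 1], ![0, -1]} n : ℤ) : ℝ) := by norm_cast
  have e2 : ∑ m ∈ range (n+1), (n.choose m : ℝ) * (hdiff m : ℝ) =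
      ((∑ m ∈ range (n+1), (n.choose m : ℤ) * hdiff m : ℤ) : ℝ) := by push_cast; rfl
  rw [e1, e2, ← full_sum, walkCount_formula, ← Int.cast_sub, ← sum_sub_distrib, Int.cast_sum]
  refine (abs_sum_le_sum_abs _ _).trans ?_
  have : ∀ k ∈ range (n+1), |(((if 2 * k ≤ n then ichoose n k - ichoose n ((k:ℤ) - 1) else 0)
        * (mid (n - k) : ℤ) - (ichoose n k - ichoose n ((k:ℤ) - 1)) * (mid (n - k) : ℤ) : ℤ) : ℝ)|
        ≤ 2 ^ n * Real.sqrt 2 ^ n := by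
    intro k hk
    have hs : 1 ≤ Real.sqrt 2 := by rw [Real.one_le_sqrt]; norm_num
    split_ifs with h
    · simp
    · rw [zero_mul, zero_sub, ← neg_mul, Int.cast_mul, abs_mul]
      have b : ∀ z : ℤ, 0 ≤ ichoose n z ∧ ichoose n z ≤ 2 ^ n := by
        intro z
        unfold ichoose
        split_ifs
        · simp
        · refine ⟨by positivity, ?_⟩
          exact_mod_cast Nat.choose_le_two_pow n z.toNat
      have b1 : |-(ichoose n k - ichoose n ((k:ℤ) - 1))| ≤ 2 ^ n := by
        have := b k
        have := b (k - 1)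
        rw [abs_le]; constructor <;> linarith [b k, b (k-1)]
      have b1' : |((-(ichoose n k - ichoose n ((k:ℤ) - 1)) : ℤ) : ℝ)| ≤ 2 ^ n := by
        exact_mod_cast b1
      have b2 : |(((mid (n - k) : ℕ) : ℤ) : ℝ)| ≤ Real.sqrt 2 ^ n := by
        rw [Int.cast_natCast, abs_of_nonneg (by positivity)]
        have c1 : (mid (n - k) : ℝ) ≤ 2 ^ (n - k) := by
          exact_mod_cast Nat.choose_le_two_pow _ _
        have c2 : (2:ℝ) ^ (n - k) = Real.sqrt 2 ^ (2 * (n - k)) := by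
          rw [pow_mul, Real.sq_sqrt (by norm_num)]
        rw [c2] at c1
        exact c1.trans (pow_le_pow_right₀ hs (by omega))
      exact mul_le_mul b1' b2 (abs_nonneg _) (by positivity)
  refine (sum_le_sum this).trans ?_
  simp

/-- weights -/
lemma sum_w (n : ℕ) : ∑ m ∈ range (n+1), (n.choose m : ℝ) * 2 ^ m = 3 ^ n := by
  have := add_pow (2:ℝ) 1 n
  rw [show (2:ℝ) + 1 = 3 by norm_num] at this
  rw [this]
  refine sum_congr rfl fun m _ => ?_
  simp; ring

lemma choose_rel (n m : ℕ) : ((n:ℝ) + 1) * n.choose m = (n+1).choose (m+1) * (m + 1) := by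
  exact_mod_cast Nat.add_one_mul_choose_eq n m

lemma sum_w_mul (n : ℕ) : ∑ m ∈ range (n+1), (n.choose m : ℝ) * 2 ^ m * m = 3 ^ n * (2 * n / 3) := by
  cases n with
  | zero => simp
  | succ n =>
    rw [sum_range_succ']
    have : ∀ m ∈ range (n+1), ((n+1).choose (m+1) : ℝ) * 2 ^ (m+1) * ((m+1 : ℕ) : ℝ)
        = 2 * (n+1) * ((n.choose m : ℝ) * 2 ^ m) := by
      intro m _
      have := choose_rel n m
      push_cast
      rw [pow_succ]
      linear_combination (-2 * 2 ^ m) * this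
    rw [sum_congr rfl this, ← mul_sum, sum_w]
    push_cast
    rw [pow_succ]; ring

lemma sum_w_shift_le (n : ℕ) :
    ∑ m ∈ range (n+1), ((n+1).choose (m+1) : ℝ) * 2 ^ (m+1) ≤ 3 ^ (n+1) := by
  have := sum_w (n+1)
  rw [sum_range_succ'] at this
  simp at this
  linarith

lemma sum_w_inv (n : ℕ) :
    ∑ m ∈ range (n+1), (n.choose m : ℝ) * 2 ^ m * (1 / ((m:ℝ) + 1)) ≤ 3 ^ n * (3 / (2 * (n + 1))) := by
  have h : ∀ m ∈ range (n+1), (n.choose m : ℝ) * 2 ^ m * (1 / ((m:ℝ) + 1)) =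
      (1 / (2 * ((n:ℝ)+1))) * (((n+1).choose (m+1) : ℝ) * 2 ^ (m+1)) := by
    intro m _
    have := choose_rel n m
    field_simp
    rw [pow_succ]
    linear_combination (2 * 2 ^ m) * this
  rw [sum_congr rfl h, ← mul_sum]
  refine (mul_le_mul_of_nonneg_left (sum_w_shift_le n) (by positivity)).trans (le_of_eq ?_)
  rw [pow_succ]; field_simp

lemma sum_w_inv2 (n : ℕ) :
    ∑ m ∈ range (n+1), (n.choose m : ℝ) * 2 ^ m * (1 / (((m:ℝ) + 1) * (m + 2)))
      ≤ 3 ^ n * (9 / (4 * ((n + 1) * (n + 2)))) := by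
  have h : ∀ m ∈ range (n+1), (n.choose m : ℝ) * 2 ^ m * (1 / (((m:ℝ) + 1) * (m + 2))) =
      (1 / (4 * (((n:ℝ)+1) * (n+2)))) * (((n+1+1).choose (m+1+1) : ℝ) * 2 ^ (m+1+1)) := by
    intro m _
    have h1 := choose_rel n m
    have h2 := choose_rel (n+1) (m+1)
    push_cast at h2
    field_simp
    rw [pow_succ, pow_succ]
    linear_combination (4 * 2 ^ m * (n + 2)) * h1 + (4 * 2 ^ m * (m+1)) * h2
  rw [sum_congr rfl h, ← mul_sum]
  have h3 : ∑ m ∈ range (n+1), ((n+1+1).choose (m+1+1) : ℝ) * 2 ^ (m+1+1) ≤ 3 ^ (n+1+1) := by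
    refine le_trans ?_ (sum_w_shift_le (n+1))
    rw [sum_range_succ' _ (n+1)]
    have : (0:ℝ) ≤ ((n+1+1).choose (0+1) : ℝ) * 2 ^ (0+1) := by positivity
    linarith
  refine (mul_le_mul_of_nonneg_left h3 (by positivity)).trans (le_of_eq ?_)
  rw [pow_succ, pow_succ]; field_simp; norm_num

lemma inv_sqrt_taylor (Y μ : ℝ) (hY : 0 < Y) (hμ : 0 < μ) :
    |1 / √Y - 1 / √μ + (Y - μ) / (2 * (μ * √μ))| ≤ (Y - μ) ^ 2 / (Y * (μ * √μ)) := by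
  obtain ⟨a, ha, rfl⟩ : ∃ a, 0 < a ∧ Y = a ^ 2 := ⟨√Y, by positivity, by rw [Real.sq_sqrt hY.le]⟩
  obtain ⟨b, hb, rfl⟩ : ∃ b, 0 < b ∧ μ = b ^ 2 := ⟨√μ, by positivity, by rw [Real.sq_sqrt hμ.le]⟩
  rw [Real.sqrt_sq ha.le, Real.sqrt_sq hb.le]
  have e : 1 / a - 1 / b + (a ^ 2 - b ^ 2) / (2 * (b ^ 2 * b))
      = (a - b) ^ 2 * ((a + 2 * b) * a) / (2 * (a ^ 2 * (b ^ 2 * b))) := by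
    field_simp; ring
  have e2 : (a ^ 2 - b ^ 2) ^ 2 / (a ^ 2 * (b ^ 2 * b))
      = (a - b) ^ 2 * (2 * (a + b) ^ 2) / (2 * (a ^ 2 * (b ^ 2 * b))) := by
    field_simp; ring
  rw [e, e2, abs_of_nonneg (by positivity)]
  have key : (a + 2 * b) * a ≤ 2 * (a + b) ^ 2 := by
    nlinarith [mul_pos ha hb, sq_nonneg a, sq_nonneg b]
  exact div_le_div_of_nonneg_right (mul_le_mul_of_nonneg_left key (sq_nonneg _)) (by positivity)

lemma inv_pow_bound (Y μ : ℝ) (hY : 1 ≤ Y) (hμ : 0 < μ) :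
    1 / (Y * √Y) ≤ 1 / √μ * (1 / Y + 2 * μ * (1 / (Y * (Y + 1)))) := by
  have hY0 : 0 < Y := by linarith
  have h1 : 1 / √Y ≤ 1 / √μ * (1 + μ / Y) := by
    obtain ⟨a, ha, rfl⟩ : ∃ a, 0 < a ∧ Y = a ^ 2 := ⟨√Y, by positivity, by rw [Real.sq_sqrt hY0.le]⟩
    obtain ⟨b, hb, rfl⟩ : ∃ b, 0 < b ∧ μ = b ^ 2 := ⟨√μ, by positivity, by rw [Real.sq_sqrt hμ.le]⟩
    rw [Real.sqrt_sq ha.le, Real.sqrt_sq hb.le]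
    have : 1 / b * (1 + b ^ 2 / a ^ 2) - 1 / a = (a ^ 2 + b ^ 2 - a * b) / (b * a ^ 2) := by
      field_simp
    have : 0 ≤ (a ^ 2 + b ^ 2 - a * b) / (b * a ^ 2) := by
      apply div_nonneg _ (by positivity)
      nlinarith [sq_nonneg (a - b), mul_pos ha hb]
    linarith
  have h2 : 1 / Y ≤ 2 / (Y + 1) := by
    rw [div_le_div_iff₀ hY0 (by linarith)]; linarith
  calc 1 / (Y * √Y) = 1 / Y * (1 / √Y) := by field_simp
    _ ≤ 1 / Y * (1 / √μ * (1 + μ / Y)) := by gcongr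
    _ = 1 / √μ * (1 / Y + μ / Y * (1 / Y)) := by field_simp
    _ ≤ 1 / √μ * (1 / Y + μ / Y * (2 / (Y + 1))) := by gcongr
    _ = _ := by field_simp

lemma le_of_sq_le_aux {a b : ℝ} (h : a ^ 2 ≤ b ^ 2) (hb : 0 ≤ b) : a ≤ b :=
  (le_abs_self a).trans (abs_le_of_sq_le_sq h hb)

lemma central_sq (k : ℕ) :
    2 / (Real.pi * (2 * k + 1)) ≤ ((mid (2 * k) : ℝ) / 2 ^ (2 * k)) ^ 2 ∧
    ((mid (2 * k) : ℝ) / 2 ^ (2 * k)) ^ 2 ≤ 2 / (Real.pi * (2 * k + 1)) * ((2 * k + 2) / (2 * k + 1)) := by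
  have h1 := Real.Wallis.W_le k
  have h2 := Real.Wallis.le_W k
  have h3 := Real.Wallis.W_eq_factorial_ratio k
  have hW := Real.Wallis.W_pos k
  have hm : (mid (2 * k) : ℝ) * ((k.factorial : ℝ) ^ 2) = (2 * k).factorial := by
    have := Nat.choose_mul_factorial_mul_factorial (show k ≤ 2 * k by omega)
    rw [show 2 * k - k = k by omega] at this
    rw [mid, show 2 * k / 2 = k by omega]
    rw [← this]; push_cast; ring
  have hc : ((mid (2 * k) : ℝ) / 2 ^ (2 * k)) ^ 2 = 1 / (Real.Wallis.W k * (2 * k + 1)) := by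
    have f1 : (0:ℝ) < k.factorial := by positivity
    have f2 : (0:ℝ) < mid (2 * k) := by
      have : 0 < mid (2 * k) := Nat.choose_pos (by omega)
      exact_mod_cast this
    rw [h3, ← hm]
    field_simp
    ring
  have hpi := Real.pi_pos
  rw [hc]
  constructor
  · rw [div_le_div_iff₀ (by positivity) (by positivity)]
    have : Real.Wallis.W k * (2 * k + 1) ≤ Real.pi / 2 * (2 * k + 1) := by gcongr
    linarith
  · have : 1 / (Real.Wallis.W k * (2 * k + 1)) ≤
        1 / (((2 : ℝ) * k + 1) / (2 * k + 2) * (Real.pi / 2) * (2 * k + 1)) := by gcongr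
    refine this.trans (le_of_eq ?_)
    field_simp

lemma mid_odd (k : ℕ) : (mid (2 * k + 1) : ℝ) * (k + 1) = mid (2 * k) * (2 * k + 1) := by
  unfold mid
  rw [show (2 * k + 1) / 2 = k by omega, show 2 * k / 2 = k by omega]
  have := Nat.choose_mul_succ_eq (2 * k) k
  rw [show 2 * k + 1 - k = k + 1 by omega] at this
  exact_mod_cast this.symm

lemma mid_even (k : ℕ) : (mid (2 * k + 2) : ℝ) = 2 * mid (2 * k + 1) := by
  unfold mid
  rw [show (2 * k + 1) / 2 = k by omega, show (2 * k + 2) / 2 = k + 1 by omega,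
    Nat.choose_succ_succ]
  have : (2 * k + 1).choose (k + 1) = (2 * k + 1).choose k := by
    have := Nat.choose_symm (show k ≤ 2 * k + 1 by omega)
    rwa [show 2 * k + 1 - k = k + 1 by omega] at this
  rw [Nat.succ_eq_add_one, this]; push_cast; ring

lemma hdiff_bound (m : ℕ) :
    |2 * ((hdiff m : ℝ) / 2 ^ m) - √(2 / Real.pi) * (1 / √((m:ℝ) + 1))|
      ≤ 2 * (1 / (((m:ℝ) + 1) * √((m:ℝ) + 1))) := by
  have hpi := Real.pi_pos
  have hq1 : √(2 / Real.pi) ≤ 1 := by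
    rw [Real.sqrt_le_one]
    rw [div_le_one hpi]; exact Real.two_le_pi
  have hq0 : 0 ≤ √(2 / Real.pi) := Real.sqrt_nonneg _
  have hq2 : √(2 / Real.pi) ^ 2 = 2 / Real.pi := Real.sq_sqrt (by positivity)
  set q := √(2 / Real.pi) with hq
  rcases Nat.even_or_odd' m with ⟨k, rfl | rfl⟩
  · obtain ⟨c1, c2⟩ := central_sq k
    rcases Nat.eq_zero_or_pos k with rfl | hk
    · simp [hdiff]
      rw [abs_le]; constructor <;> linarith
    have e : 2 * ((hdiff (2 * k) : ℝ) / 2 ^ (2 * k)) = (mid (2 * k) : ℝ) / 2 ^ (2 * k) := by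
      obtain ⟨j, rfl⟩ : ∃ j, k = j + 1 := ⟨k - 1, by omega⟩
      rw [hdiff, if_neg (by omega), show 2 * (j + 1) - 1 = 2 * j + 1 by omega,
        show 2 * (j + 1) = 2 * j + 2 by ring]
      push_cast
      rw [mid_even]; ring
    rw [e]
    set c := (mid (2 * k) : ℝ) / 2 ^ (2 * k)
    have hc0 : 0 ≤ c := by positivity
    push_cast
    set x := √(2 * (k:ℝ) + 1) with hx
    have hx0 : 0 < x := by positivity
    have hx2 : x ^ 2 = 2 * (k:ℝ) + 1 := Real.sq_sqrt (by positivity)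
    have d1 : q * (1 / x) ≤ c := by
      apply le_of_sq_le_aux _ hc0
      rw [mul_pow, div_pow, one_pow, hq2, hx2]
      refine le_trans (le_of_eq ?_) c1
      field_simp
    have d2 : c ≤ q * (1 / x) * (1 + 1 / (2 * k + 1)) := by
      apply le_of_sq_le_aux _ (by positivity)
      rw [mul_pow, mul_pow, div_pow 1, one_pow, hq2, hx2]
      have g : (2 * (k:ℝ) + 2) / (2 * k + 1) = 1 + 1 / (2 * k + 1) := by field_simp; ring
      rw [g] at c2
      have g2 : (1 + 1 / (2 * (k:ℝ) + 1)) ≤ (1 + 1 / (2 * (k:ℝ) + 1)) ^ 2 := by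
        have : 0 ≤ 1 / (2 * (k:ℝ) + 1) := by positivity
        nlinarith
      refine c2.trans ?_
      have g3 : 2 / (Real.pi * (2 * k + 1)) = 2 / Real.pi * (1 / (2 * (k:ℝ) + 1)) := by field_simp
      rw [g3]
      gcongr
    have d3 : q * (1 / x) * (1 / (2 * k + 1)) ≤ 2 * (1 / ((2 * (k:ℝ) + 1) * x)) := by
      have : q * (1 / x) * (1 / (2 * (k:ℝ) + 1)) = q * (1 / ((2 * (k:ℝ) + 1) * x)) := by field_simp
      rw [this]
      have : 0 ≤ 1 / ((2 * (k:ℝ) + 1) * x) := by positivity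
      nlinarith
    rw [abs_le]; constructor
    · have : 0 ≤ 1 / ((2 * (k:ℝ) + 1) * x) := by positivity
      linarith
    · linarith
  · obtain ⟨c1, c2⟩ := central_sq k
    have e : 2 * ((hdiff (2 * k + 1) : ℝ) / 2 ^ (2 * k + 1)) =
        (mid (2 * k) : ℝ) / 2 ^ (2 * k) * (k / (k + 1)) := by
      rw [hdiff, if_neg (by omega), show 2 * k + 1 - 1 = 2 * k by omega]
      have := mid_odd k
      push_cast
      rw [pow_succ]
      field_simp
      linear_combination this
    rw [e]
    set c := (mid (2 * k) : ℝ) / 2 ^ (2 * k)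
    have hc0 : 0 ≤ c := by positivity
    push_cast
    rw [show 2 * (k:ℝ) + 1 + 1 = 2 * k + 2 by ring]
    set x := √(2 * (k:ℝ) + 2) with hx
    have hx0 : 0 < x := by positivity
    have hx2 : x ^ 2 = 2 * (k:ℝ) + 2 := Real.sq_sqrt (by positivity)
    have d1 : q * (1 / x) ≤ c := by
      apply le_of_sq_le_aux _ hc0
      rw [mul_pow, div_pow, one_pow, hq2, hx2]
      refine le_trans ?_ c1
      rw [div_mul_div_comm, mul_one]
      gcongr
      linarith
    have d2 : c * (k / (k + 1)) ≤ q * (1 / x) := by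
      apply le_of_sq_le_aux _ (by positivity)
      rw [mul_pow, mul_pow, div_pow 1, one_pow, hq2, hx2]
      refine (mul_le_mul_of_nonneg_right c2 (by positivity)).trans ?_
      have : 2 / (Real.pi * (2 * k + 1)) * ((2 * k + 2) / (2 * k + 1)) * ((k:ℝ) / (k + 1)) ^ 2
        = 2 / Real.pi * (4 * (k:ℝ) ^ 2 / ((2 * k + 1) ^ 2 * (2 * k + 2))) := by
        field_simp; ring
      rw [this]
      refine mul_le_mul_of_nonneg_left ?_ (by positivity)
      rw [div_le_div_iff₀ (by positivity) (by positivity)]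
      have : 4 * (k:ℝ) ^ 2 ≤ (2 * k + 1) ^ 2 := by nlinarith [(Nat.cast_nonneg k : (0:ℝ) ≤ k)]
      nlinarith [(Nat.cast_nonneg k : (0:ℝ) ≤ k)]
    have d3 : q * (1 / x) * (k / (k + 1)) ≤ c * (k / (k + 1)) := by gcongr
    have d4 : q * (1 / x) * (k / (k + 1)) = q * (1 / x) - q * (2 * (1 / ((2 * (k:ℝ) + 2) * x))) := by
      field_simp; ring
    have d5 : 0 ≤ 1 / ((2 * (k:ℝ) + 2) * x) := by positivity
    rw [abs_le]; constructor
    · nlinarith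
    · nlinarith

lemma main_sum (n : ℕ) (hn : 1 ≤ n) (μ : ℝ) (hμ : μ = 2 * n / 3) :
    |2 * ∑ m ∈ range (n+1), (n.choose m : ℝ) * (hdiff m : ℝ)
      - 3 ^ n * (√(2 / Real.pi) * (1 / √μ))| ≤ 3 ^ n * (8 / (μ * √μ)) := by
  have hpi := Real.pi_pos
  have hn' : (1:ℝ) ≤ n := by exact_mod_cast hn
  have hμ0 : 0 < μ := by rw [hμ]; positivity
  have hq1 : √(2 / Real.pi) ≤ 1 := by
    rw [Real.sqrt_le_one]
    rw [div_le_one hpi]; exact Real.two_le_pi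
  have hq0 : 0 ≤ √(2 / Real.pi) := Real.sqrt_nonneg _
  set q := √(2 / Real.pi) with hq
  set w : ℕ → ℝ := fun m => (n.choose m : ℝ) * 2 ^ m with hw
  have hw0 : ∀ m, 0 ≤ w m := fun m => by simp only [hw]; positivity
  have s0 : ∑ m ∈ range (n+1), w m = 3 ^ n := sum_w n
  have s1 : ∑ m ∈ range (n+1), w m * m = 3 ^ n * μ := by rw [hμ]; exact sum_w_mul n
  have sm1 : ∑ m ∈ range (n+1), w m * (1 / ((m:ℝ) + 1)) ≤ 3 ^ n * (1 / μ) := by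
    refine (sum_w_inv n).trans ?_
    refine mul_le_mul_of_nonneg_left ?_ (by positivity)
    rw [hμ, div_le_div_iff₀ (by positivity) (by positivity)]
    linarith
  have sm1' : ∑ m ∈ range (n+1), w m * (1 / ((m:ℝ) + 1)) * μ ^ 2 ≤ 3 ^ n * μ := by
    rw [← sum_mul]
    refine (mul_le_mul_of_nonneg_right sm1 (by positivity)).trans (le_of_eq ?_)
    field_simp
  have sm2 : ∑ m ∈ range (n+1), w m * (1 / (((m:ℝ) + 1) * (m + 2))) ≤ 3 ^ n * (1 / μ ^ 2) := by
    refine (sum_w_inv2 n).trans ?_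
    refine mul_le_mul_of_nonneg_left ?_ (by positivity)
    rw [hμ, div_le_div_iff₀ (by positivity) (by positivity)]
    nlinarith
  have P : (0:ℝ) < 3 ^ n := by positivity
  have M : 0 < μ * √μ := by positivity
  -- Taylor step
  have stepA : |∑ m ∈ range (n+1), w m * (1 / √((m:ℝ) + 1)) - 3 ^ n * (1 / √μ)|
      ≤ 3 ^ n * (2 / (μ * √μ)) := by
    have t1 : |∑ m ∈ range (n+1), w m * (1 / √((m:ℝ) + 1) - 1 / √μ
        + (((m:ℝ) + 1) - μ) / (2 * (μ * √μ)))| ≤ 3 ^ n * (1 / (μ * √μ)) := by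
      refine (abs_sum_le_sum_abs _ _).trans ?_
      have : ∀ m ∈ range (n+1), |w m * (1 / √((m:ℝ) + 1) - 1 / √μ
          + (((m:ℝ) + 1) - μ) / (2 * (μ * √μ)))| ≤
          (1 / (μ * √μ)) * (w m * m + w m * (1 - 2 * μ) + w m * (1 / ((m:ℝ) + 1)) * μ ^ 2) := by
        intro m _
        rw [abs_mul, abs_of_nonneg (hw0 m)]
        have := inv_sqrt_taylor ((m:ℝ) + 1) μ (by positivity) hμ0
        refine (mul_le_mul_of_nonneg_left this (hw0 m)).trans (le_of_eq ?_)
        field_simp; ring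
      refine (sum_le_sum this).trans ?_
      rw [← mul_sum, sum_add_distrib, sum_add_distrib, s1, ← sum_mul, s0, mul_comm]
      refine mul_le_mul_of_nonneg_right ?_ (by positivity)
      linarith
    have t2 : ∑ m ∈ range (n+1), w m * (1 / √((m:ℝ) + 1) - 1 / √μ
        + (((m:ℝ) + 1) - μ) / (2 * (μ * √μ))) =
        ∑ m ∈ range (n+1), w m * (1 / √((m:ℝ) + 1)) - 3 ^ n * (1 / √μ)
        + 3 ^ n * (1 / (2 * (μ * √μ))) := by
      have : ∀ m ∈ range (n+1), w m * (1 / √((m:ℝ) + 1) - 1 / √μ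
        + (((m:ℝ) + 1) - μ) / (2 * (μ * √μ))) = w m * (1 / √((m:ℝ) + 1)) - w m * (1 / √μ)
          + (w m * m * (1 / (2 * (μ * √μ))) + w m * ((1 - μ) / (2 * (μ * √μ)))) := by
        intro m _; ring
      rw [sum_congr rfl this, sum_add_distrib, sum_add_distrib, sum_sub_distrib, ← sum_mul,
        ← sum_mul, ← sum_mul, s0, s1]
      ring
    rw [t2] at t1
    have e1 : 3 ^ n * (1 / (2 * (μ * √μ))) = (3 ^ n * (1 / (μ * √μ))) / 2 := by field_simp
    have e2 : 3 ^ n * (2 / (μ * √μ)) = 2 * (3 ^ n * (1 / (μ * √μ))) := by ring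
    have e3 : 0 ≤ 3 ^ n * (1 / (μ * √μ)) := by positivity
    rw [e1] at t1
    rw [e2]
    rw [abs_le] at t1 ⊢
    constructor <;> linarith [t1.1, t1.2]
  have stepB : |2 * ∑ m ∈ range (n+1), (n.choose m : ℝ) * (hdiff m : ℝ)
      - q * ∑ m ∈ range (n+1), w m * (1 / √((m:ℝ) + 1))| ≤ 3 ^ n * (6 / (μ * √μ)) := by
    rw [mul_sum, mul_sum, ← sum_sub_distrib]
    refine (abs_sum_le_sum_abs _ _).trans ?_
    have : ∀ m ∈ range (n+1), |2 * ((n.choose m : ℝ) * (hdiff m : ℝ))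
        - q * (w m * (1 / √((m:ℝ) + 1)))| ≤
        2 * (1 / √μ) * (w m * (1 / ((m:ℝ) + 1)) + 2 * μ * (w m * (1 / (((m:ℝ) + 1) * (m + 2))))) := by
      intro m _
      have e : 2 * ((n.choose m : ℝ) * (hdiff m : ℝ)) - q * (w m * (1 / √((m:ℝ) + 1)))
          = w m * (2 * ((hdiff m : ℝ) / 2 ^ m) - q * (1 / √((m:ℝ) + 1))) := by
        simp only [hw]; field_simp
      rw [e, abs_mul, abs_of_nonneg (hw0 m)]
      have h1 := hdiff_bound m
      have h2 := inv_pow_bound ((m:ℝ) + 1) μ (by linarith [(Nat.cast_nonneg m : (0:ℝ) ≤ m)]) hμ0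
      rw [show (m:ℝ) + 1 + 1 = m + 2 by ring] at h2
      refine (mul_le_mul_of_nonneg_left (h1.trans (mul_le_mul_of_nonneg_left h2 (by norm_num)))
        (hw0 m)).trans (le_of_eq ?_)
      ring
    refine (sum_le_sum this).trans ?_
    rw [← mul_sum, sum_add_distrib, ← mul_sum]
    have : 2 * (1 / √μ) * (∑ m ∈ range (n+1), w m * (1 / ((m:ℝ) + 1))
        + 2 * μ * ∑ m ∈ range (n+1), w m * (1 / (((m:ℝ) + 1) * (m + 2))))
        ≤ 2 * (1 / √μ) * (3 ^ n * (1 / μ) + 2 * μ * (3 ^ n * (1 / μ ^ 2))) := by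
      gcongr
    refine this.trans (le_of_eq ?_)
    field_simp; ring
  have stepC : |q * ∑ m ∈ range (n+1), w m * (1 / √((m:ℝ) + 1)) - 3 ^ n * (q * (1 / √μ))|
      ≤ 3 ^ n * (2 / (μ * √μ)) := by
    have : q * ∑ m ∈ range (n+1), w m * (1 / √((m:ℝ) + 1)) - 3 ^ n * (q * (1 / √μ))
      = q * (∑ m ∈ range (n+1), w m * (1 / √((m:ℝ) + 1)) - 3 ^ n * (1 / √μ)) := by ring
    rw [this, abs_mul, abs_of_nonneg hq0]
    exact (mul_le_of_le_one_left (abs_nonneg _) hq1).trans stepA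
  have e : 3 ^ n * (8 / (μ * √μ)) = 3 ^ n * (6 / (μ * √μ)) + 3 ^ n * (2 / (μ * √μ)) := by ring
  rw [e]
  exact (abs_sub_le _ _ _).trans (add_le_add stepB stepC)

lemma exp_bound : ∃ C : ℝ, 0 < C ∧ ∀ n : ℕ, 1 ≤ n →
    ((n:ℝ) + 1) * (2 ^ n * Real.sqrt 2 ^ n) / 3 ^ n * √n ≤ C / n := by
  set r : ℝ := 2 * √2 / 3 with hr
  have hr0 : 0 ≤ r := by positivity
  have hr1 : r < 1 := by
    rw [hr, div_lt_one (by norm_num)]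
    have : √2 < 3 / 2 := by
      rw [Real.sqrt_lt' (by norm_num)]; norm_num
    linarith
  have ht := tendsto_pow_const_mul_const_pow_of_lt_one 3 hr0 hr1
  obtain ⟨C, hC⟩ := ht.bddAbove_range
  refine ⟨2 * |C| + 1, by positivity, fun n hn => ?_⟩
  have h1 : (n:ℝ) ^ 3 * r ^ n ≤ C := hC ⟨n, rfl⟩
  have hn' : (1:ℝ) ≤ n := by exact_mod_cast hn
  have h2 : √(n:ℝ) ≤ n := by
    rw [Real.sqrt_le_left (by linarith)]; nlinarith
  have h3 : (2:ℝ) ^ n * Real.sqrt 2 ^ n = r ^ n * 3 ^ n := by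
    rw [← mul_pow, ← mul_pow, hr]; congr 1; ring
  rw [h3, le_div_iff₀ (by linarith)]
  have h4 : ((n:ℝ) + 1) * (r ^ n * 3 ^ n) / 3 ^ n * √n * n = (n + 1) * r ^ n * √n * n := by
    field_simp
  rw [h4]
  have : ((n:ℝ) + 1) * r ^ n * √n * n ≤ (n + n) * r ^ n * n * n := by gcongr
  have h5 := le_abs_self C
  nlinarith

theorem asymptotics_NE_NW_S :
    ∃ c : ℝ, 0 < c ∧ ∀ n : ℕ, 1 ≤ n →
      |(walkCount 2 {![1, 1], ![-1, 1], ![0, -1]} n : ℝ) * (3 : ℝ) ^ (-(n : ℤ))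
          * (n : ℝ) ^ ((1 : ℝ) / 2)
        - Real.sqrt 3 / (2 * Real.sqrt Real.pi)|
      ≤ c / n := by
  obtain ⟨C, hC, hexp⟩ := exp_bound
  refine ⟨C + 12, by positivity, fun n hn => ?_⟩
  have hn' : (1:ℝ) ≤ n := by exact_mod_cast hn
  have hn0 : (0:ℝ) < n := by linarith
  have hpi := Real.pi_pos
  have ht := tail_bound n
  have hm := main_sum n hn (2 * n / 3) rfl
  have he := hexp n hn
  set s : ℝ := (walkCount 2 {![1, 1], ![-1, 1], ![0, -1]} n : ℝ)
  set D : ℝ := ∑ m ∈ range (n+1), (n.choose m : ℝ) * (hdiff m : ℝ)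
  rw [← Real.sqrt_eq_rpow, zpow_neg, zpow_natCast]
  have P : (0:ℝ) < 3 ^ n := by positivity
  have hc : √3 / (2 * √Real.pi) =
      1 / 2 * (√(2 / Real.pi) * (1 / √(2 * n / 3))) * √n := by
    have h6 : √(2 * (n:ℝ) / 3) = √2 * √n / √3 := by
      rw [Real.sqrt_div (by positivity), Real.sqrt_mul (by norm_num)]
    rw [h6, Real.sqrt_div (by norm_num)]
    field_simp
  have e : s * (3 ^ n)⁻¹ * √n - √3 / (2 * √Real.pi) =
      (s - D) / 3 ^ n * √n
      + (2 * D - 3 ^ n * (√(2 / Real.pi) * (1 / √(2 * n / 3)))) / 3 ^ n * (√n / 2) := by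
    rw [hc]; field_simp; ring
  have b1 : |(s - D) / 3 ^ n * √n| ≤ C / n := by
    rw [abs_mul, abs_div, abs_of_pos P, abs_of_nonneg (Real.sqrt_nonneg (n:ℝ))]
    refine le_trans ?_ he
    gcongr
  have b2 : |(2 * D - 3 ^ n * (√(2 / Real.pi) * (1 / √(2 * n / 3)))) / 3 ^ n * (√n / 2)|
      ≤ 12 / n := by
    rw [abs_mul, abs_div, abs_of_pos P, abs_of_nonneg (show 0 ≤ √(n:ℝ) / 2 by positivity)]
    have h1 : |2 * D - 3 ^ n * (√(2 / Real.pi) * (1 / √(2 * n / 3)))| / 3 ^ n * (√n / 2)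
      ≤ (3 ^ n * (8 / (2 * n / 3 * √(2 * n / 3)))) / 3 ^ n * (√n / 2) := by gcongr
    refine h1.trans ?_
    have h2 : √(n:ℝ) ≤ 2 * √(2 * n / 3) := by
      have : √(n:ℝ) ≤ √(2 ^ 2 * (2 * n / 3)) := Real.sqrt_le_sqrt (by linarith)
      rwa [Real.sqrt_mul (by norm_num), Real.sqrt_sq (by norm_num)] at this
    have h3 : 0 < √(2 * (n:ℝ) / 3) := by positivity
    have h4 : (3 ^ n * (8 / (2 * n / 3 * √(2 * n / 3)))) / 3 ^ n * (√n / 2)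
        = 6 * √n / (n * √(2 * n / 3)) := by
      field_simp; norm_num
    rw [h4, div_le_div_iff₀ (by positivity) hn0]
    nlinarith
  rw [e, add_div]
  exact (abs_add_le _ _).trans (add_le_add b1 b2)
end

section
/- Let s_n be the number of walks of length n with steps in {(0,1),(1,−1),(0,−1),(−1,−1)} (the model N, SE, S, SW), beginning at the origin and confined to ℕ². Then there is a constant c > 0 such that for all n ≥ 1, | s_n · (2√3)^{−n} · n² − κ_n | ≤ c/n, where κ_n = 12√3/π when n is even and κ_n = 18/π when n is odd. -/
open Finset

namespace WalkAux

/-- The four steps N, SE, S, SW. -/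
def st : Fin 4 → (Fin 2 → ℤ) := ![![0, 1], ![1, -1], ![0, -1], ![-1, -1]]

lemma st_injective : Function.Injective st := by
  intro a b hab
  have h0 := congrFun hab 0
  have h1 := congrFun hab 1
  fin_cases a <;> fin_cases b <;> simp [st] at h0 h1 ⊢

lemma range_st : Set.range st =
    ({![0, 1], ![1, -1], ![0, -1], ![-1, -1]} : Set (Fin 2 → ℤ)) := by
  ext v
  simp only [Set.mem_range, Set.mem_insert_iff, Set.mem_singleton_iff, Fin.exists_fin_succ, st]
  simp [eq_comm]

/-- Validity of a coded walk started at `p`. -/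
def Ok (n : ℕ) (p : Fin 2 → ℤ) (w : Fin n → Fin 4) : Prop :=
  ∀ k : Fin n, ∀ m : Fin 2, 0 ≤ p m + ∑ j ∈ Finset.Iic k, st (w j) m

/-- Number of valid coded walks. -/
noncomputable def cnt (n : ℕ) (p : Fin 2 → ℤ) : ℕ := Nat.card {w : Fin n → Fin 4 // Ok n p w}

lemma walkCount_eq (n : ℕ) :
    walkCount 2 {![0, 1], ![1, -1], ![0, -1], ![-1, -1]} n = cnt n 0 := by
  rw [← range_st]
  unfold walkCount cnt
  symm
  refine Nat.card_congr (Equiv.ofBijective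
    (fun w => ⟨fun k => st (w.1 k), fun k => ⟨_, rfl⟩, fun k m => by
      simpa using w.2 k m⟩) ⟨?_, ?_⟩)
  · intro a b hab
    apply Subtype.ext
    funext k
    exact st_injective (congrFun (congrArg Subtype.val hab) k)
  · rintro ⟨u, hu, hv⟩
    have hu' := hu
    choose w hw using hu'
    refine ⟨⟨w, fun k m => ?_⟩, ?_⟩
    · simpa [hw] using hv k m
    · apply Subtype.ext
      funext k
      exact hw k

lemma sum_Iic_succ {n : ℕ} (k : Fin n) (f : Fin (n+1) → ℤ) :
    ∑ j ∈ Finset.Iic k.succ, f j = f 0 + ∑ j ∈ Finset.Iic k, f j.succ := by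
  have h1 : (Finset.Iic k.succ) = Finset.univ.filter (fun j => j ≤ k.succ) := by ext; simp
  have h2 : (Finset.Iic k) = Finset.univ.filter (fun j => j ≤ k) := by ext; simp
  rw [h1, h2, Finset.sum_filter, Finset.sum_filter, Fin.sum_univ_succ]
  simp

lemma ok_cons {n : ℕ} (p : Fin 2 → ℤ) (i : Fin 4) (w : Fin n → Fin 4) :
    Ok (n+1) p (Fin.cons i w : Fin (n+1) → Fin 4) ↔ (∀ m, 0 ≤ (p + st i) m) ∧ Ok n (p + st i) w := by
  unfold Ok
  rw [Fin.forall_fin_succ]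
  apply and_congr
  · have : (Finset.Iic (0 : Fin (n+1))) = {0} := by ext; simp
    simp [this]
  · simp [sum_Iic_succ, add_assoc]

lemma cnt_zero (p) : cnt 0 p = 1 := by
  unfold cnt
  have : ∀ w, Ok 0 p w := fun w k => k.elim0
  simp [this]

open Classical in
lemma cnt_succ (n : ℕ) (p) : cnt (n+1) p =
    ∑ i : Fin 4, if (∀ m, 0 ≤ (p + st i) m) then cnt n (p + st i) else 0 := by
  unfold cnt
  have e : {w : Fin (n+1) → Fin 4 // Ok (n+1) p w} ≃
      Σ i : Fin 4, {w : Fin n → Fin 4 // (∀ m, 0 ≤ (p + st i) m) ∧ Ok n (p + st i) w} :=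
    { toFun := fun w => ⟨w.1 0, ⟨Fin.tail w.1, (ok_cons p (w.1 0) (Fin.tail w.1)).1 (by
        rw [Fin.cons_self_tail]; exact w.2)⟩⟩
      invFun := fun t => ⟨Fin.cons t.1 t.2.1, (ok_cons _ _ _).2 t.2.2⟩
      left_inv := fun w => by simp
      right_inv := fun t => by rfl }
  rw [Nat.card_congr e, Nat.card_sigma]
  refine Finset.sum_congr rfl fun i _ => ?_
  split_ifs with h
  · simp only [h, true_and, implies_true]
  · simp only [h, false_and]
    simp

/-- Dyck-type prefixes from height `y` with `k` down steps. -/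
def B : ℕ → ℕ → ℕ → ℕ
  | 0, _, k => if k = 0 then 1 else 0
  | n+1, 0, k => B n 1 k
  | n+1, y+1, 0 => B n (y+2) 0
  | n+1, y+1, k+1 => B n (y+2) (k+1) + B n y k

/-- Motzkin-type prefixes from height `x`. -/
def H : ℕ → ℕ → ℕ
  | 0, _ => 1
  | k+1, 0 => H k 1 + H k 0
  | k+1, x+1 => H k (x+2) + H k (x+1) + H k x

lemma B_zero_of_lt (n : ℕ) : ∀ y k, n < k → B n y k = 0 := by
  induction n with
  | zero => intro y k h; simp [B]; omega
  | succ n ih =>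
    intro y k h
    match y, k with
    | 0, k => simp only [B]; exact ih _ _ (by omega)
    | y+1, 0 => omega
    | y+1, k+1 => simp only [B]; rw [ih _ _ (by omega), ih _ _ (by omega)]

lemma cnt_eq (n : ℕ) : ∀ x y : ℕ,
    cnt n ![(x:ℤ), (y:ℤ)] = ∑ k ∈ Finset.range (n+1), B n y k * H k x := by
  induction n with
  | zero => intro x y; simp [cnt_zero, B, H]
  | succ n ih =>
    intro x y
    rw [cnt_succ, Fin.sum_univ_four]
    have e0 : (![(x:ℤ), (y:ℤ)] + st 0) = ![(x:ℤ), ((y+1 : ℕ):ℤ)] := by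
      ext i; fin_cases i <;> simp [st]
    have hB : ∀ k, k = n + 1 → B n (y+1) k = 0 := fun k hk => B_zero_of_lt _ _ _ (by omega)
    rw [e0, if_pos (by intro m; fin_cases m <;> simp <;> positivity), ih]
    cases y with
    | zero =>
      have f : ∀ i : Fin 4, i ≠ 0 → ¬ (∀ m, 0 ≤ (![(x:ℤ), ((0:ℕ):ℤ)] + st i) m) := by
        intro i hi h
        have := h 1
        fin_cases i <;> simp [st] at this hi
      rw [if_neg (f 1 (by decide)), if_neg (f 2 (by decide)), if_neg (f 3 (by decide))]
      rw [Finset.sum_range_succ _ (n+1)]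
      simp [B, hB]
    | succ y =>
      have e1 : (![(x:ℤ), ((y+1:ℕ):ℤ)] + st 1) = ![((x+1:ℕ):ℤ), (y:ℤ)] := by
        ext i; fin_cases i <;> simp [st]
      have e2 : (![(x:ℤ), ((y+1:ℕ):ℤ)] + st 2) = ![(x:ℤ), (y:ℤ)] := by
        ext i; fin_cases i <;> simp [st]
      rw [e1, e2, if_pos (by intro m; fin_cases m <;> simp <;> positivity),
        if_pos (by intro m; fin_cases m <;> simp), ih, ih]
      have key : ∑ k ∈ Finset.range (n+1+1), B (n+1) (y+1) k * H k x =
          ∑ k ∈ Finset.range (n+1), B n (y+1+1) k * H k x +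
          ∑ k ∈ Finset.range (n+1), B n y k * H (k+1) x := by
        have : ∑ k ∈ Finset.range (n+1), B n (y+1+1) k * H k x =
            ∑ k ∈ Finset.range (n+1+1), B n (y+1+1) k * H k x := by
          rw [Finset.sum_range_succ _ (n+1)]; simp [hB]
        rw [this, Finset.sum_range_succ', Finset.sum_range_succ' _ (n+1)]
        simp only [B, add_mul, Finset.sum_add_distrib]
        ring
      rw [key]
      cases x with
      | zero =>
        have f : ¬ (∀ m, 0 ≤ (![((0:ℕ):ℤ), ((y+1:ℕ):ℤ)] + st 3) m) := by
          intro h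
          have := h 0
          simp [st] at this
        rw [if_neg f]
        simp only [H, mul_add, Finset.sum_add_distrib]
        ring
      | succ x =>
        have e3 : (![((x+1:ℕ):ℤ), ((y+1:ℕ):ℤ)] + st 3) = ![(x:ℤ), (y:ℤ)] := by
          ext i; fin_cases i <;> simp [st]
        rw [e3, if_pos (by intro m; fin_cases m <;> simp), ih]
        simp only [H, mul_add, Finset.sum_add_distrib]
        ring

lemma B_gt (n : ℕ) : ∀ y k, n + y < 2 * k → B n y k = 0 := by
  induction n with
  | zero => intro y k h; simp [B]; omega
  | succ n ih =>
    intro y k h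
    match y, k with
    | 0, k =>
      simp only [B]
      exact ih _ _ (by omega)
    | y+1, 0 => omega
    | y+1, k+1 => simp only [B]; rw [ih _ _ (by omega), ih _ _ (by omega)]

lemma B_small (n : ℕ) : ∀ y k, k ≤ y → B n y k = n.choose k := by
  induction n with
  | zero => intro y k h; cases k <;> simp [B]
  | succ n ih =>
    intro y k h
    match y, k with
    | 0, 0 => simp [B, ih]
    | y+1, 0 => simp only [B]; rw [ih _ _ (by omega)]; simp
    | y+1, k+1 =>
      simp only [B]; rw [ih _ _ (by omega), ih _ _ (by omega), Nat.choose_succ_succ]; ring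

lemma B_big (n : ℕ) : ∀ y k, 2 * k + y + 1 ≤ n →
    B n y (k+y+1) + n.choose k = n.choose (k+y+1) := by
  induction n with
  | zero => intro y k h; omega
  | succ n ih =>
    intro y k h
    match y, k with
    | 0, 0 =>
      simp only [B]
      rw [B_small n 1 _ (by omega)]; simp
    | 0, k+1 =>
      simp only [B]
      have h1 := ih 1 k (by omega)
      have e : k + 1 + 0 + 1 = k + 1 + 1 := by omega
      rw [e, Nat.choose_succ_succ' n k, Nat.choose_succ_succ' n (k+1)]
      omega
    | y+1, 0 =>
      have e : 0 + (y+1) + 1 = (y+1) + 1 := by omega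
      rw [e]
      simp only [B]
      have h2 := ih y 0 (by omega)
      have e' : 0 + y + 1 = y + 1 := by omega
      rw [e'] at h2
      rw [B_small n _ _ (by omega), Nat.choose_succ_succ n (y+1)]
      simp at h2 ⊢
      omega
    | y+1, k+1 =>
      have e : k + 1 + (y+1) + 1 = (k+1+y+1) + 1 := by omega
      rw [e]
      simp only [B]
      have h2 := ih y (k+1) (by omega)
      have h1 := ih (y+2) k (by omega)
      have e' : k + (y+2) + 1 = k+1+y+1+1 := by omega
      rw [e'] at h1
      rw [Nat.choose_succ_succ' n k, Nat.choose_succ_succ' n (k+1+y+1)]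
      omega

lemma B_real (n k : ℕ) (h : 2 * k ≤ n) :
    (B n 0 k : ℝ) = ((n:ℝ) - 2 * k + 1) / (n - k + 1) * n.choose k := by
  have hk : (k:ℝ) ≤ n := by exact_mod_cast (by omega : k ≤ n)
  have hpos : (0:ℝ) < n - k + 1 := by linarith
  cases k with
  | zero =>
    rw [B_small n 0 0 le_rfl]
    have : (0:ℝ) < n + 1 := by positivity
    simp
    field_simp
  | succ k =>
    have h1 : ((B n 0 (k+1) : ℕ):ℝ) + n.choose k = n.choose (k+1) := by
      exact_mod_cast B_big n 0 k (by omega)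
    have h2 : (n.choose (k+1) : ℝ) * (k+1) = n.choose k * (n - k) := by
      have := Nat.choose_succ_right_eq n k
      have h3 : ((n - k : ℕ) : ℝ) = n - k := Nat.cast_sub (by omega)
      rw [← h3]
      exact_mod_cast this
    push_cast at *
    have h4 : (B n 0 (k+1) : ℝ) = n.choose (k+1) - n.choose k := by linarith
    rw [h4, div_mul_eq_mul_div, eq_div_iff hpos.ne']
    linear_combination h2

lemma walkCount_sum (n : ℕ) :
    (walkCount 2 {![0, 1], ![1, -1], ![0, -1], ![-1, -1]} n : ℝ) =
      ∑ k ∈ Finset.range (n/2+1),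
        ((n:ℝ) - 2 * k + 1) / (n - k + 1) * n.choose k * H k 0 := by
  rw [walkCount_eq]
  have e : (0 : Fin 2 → ℤ) = ![((0:ℕ):ℤ), ((0:ℕ):ℤ)] := by ext i; fin_cases i <;> simp
  rw [e, cnt_eq]
  push_cast
  rw [← Finset.sum_subset (s₁ := Finset.range (n/2+1))]
  · refine Finset.sum_congr rfl fun k hk => ?_
    rw [B_real n k (by simp at hk; omega)]
  · intro k; simp only [Finset.mem_range]; omega
  · intro k _ hk
    rw [B_gt n 0 k (by simp at hk; omega)]
    simp
open Real intervalIntegral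

/-- `D i θ = sin ((i+1) θ) cot (θ/2)` as a trigonometric polynomial. -/
noncomputable def D (i : ℕ) (θ : ℝ) : ℝ :=
  ∑ j ∈ Finset.range (i+1), (cos (j * θ) + cos ((j+1) * θ))

lemma D_succ (i : ℕ) (θ : ℝ) :
    D (i+1) θ = D i θ + (cos ((i+1) * θ) + cos ((i+2) * θ)) := by
  unfold D
  rw [Finset.sum_range_succ]
  push_cast
  rw [show (i:ℝ) + 1 + 1 = i + 2 by ring]

lemma D_zero (θ : ℝ) : D 0 θ = 1 + cos θ := by simp [D]

lemma D_cont (i : ℕ) : Continuous (D i) := by unfold D; fun_prop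

lemma two_cos_mul (a θ : ℝ) : 2 * cos θ * cos ((a+1) * θ) = cos ((a+2) * θ) + cos (a * θ) := by
  have h1 : (a+2) * θ = (a+1) * θ + θ := by ring
  have h2 : a * θ = (a+1) * θ - θ := by ring
  rw [h1, h2, cos_add, cos_sub]; ring

lemma D_rec0 (θ : ℝ) : (1 + 2 * cos θ) * D 0 θ = D 1 θ + D 0 θ := by
  have h := D_succ 0 θ
  have h2 := two_cos_mul 0 θ
  simp at h h2
  rw [h, D_zero]
  linear_combination h2

lemma D_rec (θ : ℝ) (i : ℕ) :
    (1 + 2 * cos θ) * D (i+1) θ = D (i+2) θ + D (i+1) θ + D i θ := by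
  induction i with
  | zero =>
    have h0 := D_rec0 θ
    have h1 := D_succ 0 θ
    have h2 := D_succ 1 θ
    have h3 := two_cos_mul 0 θ
    have h4 := two_cos_mul 1 θ
    have hz := D_zero θ
    norm_num at h0 h1 h2 h3 h4 ⊢
    rw [h2, h1, hz]
    linear_combination 2 * h3 + h4
  | succ i ih =>
    have h1 := D_succ (i+1) θ
    have h2 := D_succ (i+2) θ
    have h0 := D_succ i θ
    have h3 := two_cos_mul (i+1) θ
    have h4 := two_cos_mul (i+2) θ
    push_cast at *
    have e1 : ((i:ℝ) + 1 + 1) = i + 2 := by ring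
    have e2 : ((i:ℝ) + 1 + 2) = i + 3 := by ring
    have e3 : ((i:ℝ) + 2 + 1) = i + 3 := by ring
    have e4 : ((i:ℝ) + 2 + 2) = i + 4 := by ring
    rw [e1, e2] at h1 h3
    rw [e3, e4] at h2 h4
    rw [show i + 1 + 2 = i + 2 + 1 from rfl, h2, show i + 1 + 1 = i + 2 from rfl]
    rw [show i + 1 + 1 = i + 2 from rfl] at h1
    linear_combination ih + (2 * cos θ) * h1 - h1 + h1 + h3 + h4 - h0

lemma int_cos_mul (m : ℕ) : ∫ θ in (0:ℝ)..π, cos (((m:ℝ)+1) * θ) = 0 := by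
  have hm : ((m:ℝ)+1) ≠ 0 := by positivity
  rw [integral_comp_mul_left (fun x => cos x) hm]
  have : sin (((m:ℝ)+1) * π) = 0 := by exact_mod_cast sin_nat_mul_pi (m+1)
  simp [this]

lemma int_D (i : ℕ) : ∫ θ in (0:ℝ)..π, D i θ = π := by
  induction i with
  | zero =>
    simp only [D_zero]
    rw [integral_add (by simp) (continuous_cos.intervalIntegrable _ _)]
    simp
  | succ i ih =>
    simp only [D_succ]
    have c1 : Continuous fun θ : ℝ => cos (((i:ℝ)+1) * θ) := by fun_prop
    have c2 : Continuous fun θ : ℝ => cos (((i:ℝ)+2) * θ) := by fun_prop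
    have c3 : Continuous fun θ : ℝ => cos (((i:ℝ)+1) * θ) + cos (((i:ℝ)+2) * θ) := c1.add c2
    rw [integral_add ((D_cont i).intervalIntegrable _ _) (c3.intervalIntegrable _ _),
      integral_add (c1.intervalIntegrable _ _) (c2.intervalIntegrable _ _), ih, int_cos_mul]
    have := int_cos_mul (i+1)
    push_cast at this
    have e1 : ((i:ℝ) + 1 + 1) = i + 2 := by ring
    rw [e1] at this
    rw [this]; ring

lemma H_int (k : ℕ) : ∀ i, (H k i : ℝ) * π = ∫ θ in (0:ℝ)..π, (1 + 2 * cos θ) ^ k * D i θ := by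
  induction k with
  | zero => intro i; simp [H, int_D]
  | succ k ih =>
    have ii : ∀ i, IntervalIntegrable (fun θ => (1 + 2 * cos θ) ^ k * D i θ)
        MeasureTheory.volume 0 π := fun i =>
      (Continuous.mul (by fun_prop) (D_cont i)).intervalIntegrable _ _
    intro i
    cases i with
    | zero =>
      have e : ∀ θ, (1 + 2 * cos θ) ^ (k+1) * D 0 θ =
          (1 + 2 * cos θ) ^ k * D 1 θ + (1 + 2 * cos θ) ^ k * D 0 θ := by
        intro θ; rw [pow_succ, mul_assoc, D_rec0]; ring
      simp only [e, H]
      rw [integral_add (ii 1) (ii 0), ← ih, ← ih]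
      push_cast; ring
    | succ i =>
      have e : ∀ θ, (1 + 2 * cos θ) ^ (k+1) * D (i+1) θ =
          (1 + 2 * cos θ) ^ k * D (i+2) θ + (1 + 2 * cos θ) ^ k * D (i+1) θ
            + (1 + 2 * cos θ) ^ k * D i θ := by
        intro θ; rw [pow_succ, mul_assoc, D_rec]; ring
      simp only [e, H]
      rw [integral_add ((ii _).add (ii _)) (ii _), integral_add (ii _) (ii _), ← ih, ← ih, ← ih]
      push_cast; ring

/-- The integral of `(1 - v²)^k` over `[0,1]`. -/
noncomputable def V (k : ℕ) : ℝ := ∫ v in (0:ℝ)..1, (1 - v^2) ^ k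

lemma V_cos (k : ℕ) : V k = ∫ x in (0:ℝ)..(π/2), cos x ^ (2*k+1) := by
  have := integral_sin_pow_mul_cos_pow_odd (a := 0) (b := π/2) 0 k
  simp at this
  rw [this, V]

lemma V_succ (k : ℕ) : V (k+1) = V k * ((2*k+2)/(2*k+3)) := by
  rw [V_cos, V_cos, show 2 * (k+1) + 1 = (2*k+1) + 2 by ring, integral_cos_pow]
  simp
  ring

lemma V_zero : V 0 = 1 := by simp [V]

lemma V_pos (k : ℕ) : 0 < V k := by
  induction k with
  | zero => simp [V_zero]
  | succ k ih => rw [V_succ]; positivity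

lemma V_sq (k : ℕ) : V k ^ 2 = Wallis.W k / (2*k+1) := by
  induction k with
  | zero => simp [V_zero, Wallis.W]
  | succ k ih =>
    rw [V_succ, mul_pow, ih, Wallis.W_succ]
    push_cast
    field_simp
    ring

lemma H_sub (k : ℕ) : (H k 0 : ℝ) * π =
    4 * ∫ s in (0:ℝ)..1, (3 - 4 * s^2)^k * √(1 - s^2) := by
  rw [H_int]
  have h := integral_comp_mul_deriv (a := 0) (b := π) (f := fun θ => sin (θ/2))
    (f' := fun θ => cos (θ/2) * (1/2)) (g := fun s => (3 - 4 * s^2)^k * √(1 - s^2))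
    (fun x _ => by
      have := (hasDerivAt_id x).div_const 2
      simpa using this.sin) (by fun_prop) (by fun_prop)
  simp only [zero_div, sin_zero, sin_pi_div_two] at h
  rw [← h, ← integral_const_mul]
  apply integral_congr
  intro θ hθ
  rw [Set.uIcc_of_le pi_pos.le] at hθ
  have hc : 0 ≤ cos (θ/2) := cos_nonneg_of_mem_Icc ⟨by linarith [hθ.1, pi_pos], by linarith [hθ.2]⟩
  have hs : √(1 - sin (θ/2)^2) = cos (θ/2) := by
    rw [← cos_sq', sqrt_sq hc]
  have hcos : cos θ = 2 * cos (θ/2)^2 - 1 := by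
    rw [← cos_two_mul]; congr 1; ring
  simp only [Function.comp, D_zero, hs]
  rw [sin_sq, hcos]
  ring_nf

lemma H_bound (k : ℕ) :
    |(H k 0 : ℝ) * π - 2 * √3 * 3^k * V k| ≤ 2 * √3 * 3^k * V k / (2*k+3) + 4 := by
  have h3 : (0:ℝ) < √3 := by positivity
  have h3s : √3 ^ 2 = (3:ℝ) := sq_sqrt (by norm_num)
  have h32 : √3 < 2 := by nlinarith
  have gc : Continuous fun s : ℝ => (3 - 4 * s^2)^k * √(1 - s^2) := by fun_prop
  have hsplit : ∫ s in (0:ℝ)..1, (3 - 4 * s^2)^k * √(1 - s^2) =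
      (∫ s in (0:ℝ)..(√3/2), (3 - 4 * s^2)^k * √(1 - s^2)) +
      ∫ s in (√3/2)..1, (3 - 4 * s^2)^k * √(1 - s^2) :=
    (integral_add_adjacent_intervals (gc.intervalIntegrable _ _) (gc.intervalIntegrable _ _)).symm
  have hI2 : |∫ s in (√3/2)..1, (3 - 4 * s^2)^k * √(1 - s^2)| ≤ 1 := by
    have := norm_integral_le_of_norm_le_const (a := √3/2) (b := 1) (C := 1)
      (f := fun s : ℝ => (3 - 4 * s^2)^k * √(1 - s^2)) (by
        intro s hs
        rw [Set.uIoc_of_le (by linarith)] at hs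
        rw [norm_mul, norm_pow]
        have a1 : ‖3 - 4 * s^2‖ ≤ 1 := by
          rw [norm_eq_abs, abs_le]
          constructor <;> nlinarith [hs.1, hs.2]
        have a2 : ‖√(1 - s^2)‖ ≤ 1 := by
          rw [norm_eq_abs, abs_of_nonneg (sqrt_nonneg _), sqrt_le_iff]
          refine ⟨by norm_num, ?_⟩
          nlinarith [sq_nonneg s]
        have a3 := pow_le_one₀ (n := k) (norm_nonneg _) a1
        nlinarith [norm_nonneg (√(1 - s^2)), norm_nonneg (3 - 4 * s^2)])
    rw [norm_eq_abs] at this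
    refine this.trans ?_
    rw [abs_of_nonneg (by linarith)]
    linarith
  have hI1 : (∫ s in (0:ℝ)..(√3/2), (3 - 4 * s^2)^k * √(1 - s^2)) =
      √3/2 * 3^k * ∫ v in (0:ℝ)..1, (1 - v^2)^k * √(1 - 3/4 * v^2) := by
    have := smul_integral_comp_mul_left (a := 0) (b := 1)
      (fun s : ℝ => (3 - 4 * s^2)^k * √(1 - s^2)) (√3/2)
    simp only [mul_zero, mul_one, smul_eq_mul] at this
    rw [← this, mul_assoc (√3/2), ← integral_const_mul (3^k)]
    congr 2
    ext v
    rw [← mul_assoc, ← mul_pow]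
    have e : (√3/2 * v)^2 = 3/4 * v^2 := by rw [mul_pow, div_pow, h3s]; norm_num
    rw [e]
    ring_nf
  have c1 : Continuous fun v : ℝ => (1 - v^2)^k := by fun_prop
  have c2 : Continuous fun v : ℝ => (1 - v^2)^(k+1) := by fun_prop
  have c3 : Continuous fun v : ℝ => (1 - v^2)^k * √(1 - 3/4 * v^2) := by fun_prop
  have hup : ∫ v in (0:ℝ)..1, (1 - v^2)^k * √(1 - 3/4 * v^2) ≤ V k := by
    apply integral_mono_on (by norm_num) (c3.intervalIntegrable _ _) (c1.intervalIntegrable _ _)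
    intro v hv
    have b1 : 0 ≤ (1 - v^2)^k := pow_nonneg (by nlinarith [hv.1, hv.2]) _
    have b2 : √(1 - 3/4 * v^2) ≤ 1 := by
      rw [sqrt_le_iff]; refine ⟨by norm_num, ?_⟩; nlinarith [sq_nonneg v]
    nlinarith
  have hlo : V (k+1) ≤ ∫ v in (0:ℝ)..1, (1 - v^2)^k * √(1 - 3/4 * v^2) := by
    apply integral_mono_on (by norm_num) (c2.intervalIntegrable _ _) (c3.intervalIntegrable _ _)
    intro v hv
    have b0 : v^2 ≤ 1 := by nlinarith [hv.1, hv.2]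
    have b1 : 0 ≤ (1 - v^2)^k := pow_nonneg (by linarith) _
    have b2 : 1 - v^2 ≤ √(1 - 3/4 * v^2) := by
      apply le_sqrt_of_sq_le
      nlinarith [sq_nonneg v]
    rw [pow_succ]
    exact mul_le_mul_of_nonneg_left b2 b1
  rw [V_succ] at hlo
  have hV := V_pos k
  set J := ∫ v in (0:ℝ)..1, (1 - v^2)^k * √(1 - 3/4 * v^2)
  set I2 := ∫ s in (√3/2)..1, (3 - 4 * s^2)^k * √(1 - s^2)
  rw [H_sub, hsplit, hI1]
  have hk : (0:ℝ) < 2*k+3 := by positivity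
  have hJ : |J - V k| ≤ V k / (2*k+3) := by
    rw [abs_le]
    constructor
    · have : V k * ((2*k+2)/(2*k+3)) = V k - V k / (2*k+3) := by field_simp; ring
      linarith
    · have : 0 ≤ V k / (2*k+3) := by positivity
      linarith
  have e : 4 * (√3/2 * 3^k * J + I2) - 2 * √3 * 3^k * V k =
      2 * √3 * 3^k * (J - V k) + 4 * I2 := by ring
  rw [e]
  refine (abs_add_le _ _).trans ?_
  rw [abs_mul, abs_mul 4, abs_of_pos (show (0:ℝ) < 2 * √3 * 3^k by positivity)]
  have : 2 * √3 * 3^k * |J - V k| ≤ 2 * √3 * 3^k * (V k / (2*k+3)) := by gcongr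
  rw [← mul_div_assoc] at this
  norm_num
  linarith

lemma le_of_sq_le {x d : ℝ} (h1 : 1 ≤ x) (h : x ^ 2 ≤ 1 + d) : x ≤ 1 + d := by nlinarith

/-- Normalised `V`. -/
noncomputable def vn (k : ℕ) : ℝ := V k * √((k:ℝ)+1) * 2 / √π

lemma vn_sq (k : ℕ) : vn k ^ 2 = Wallis.W k * (2/π) * ((2*k+2)/(2*k+1)) := by
  unfold vn
  have h1 : √((k:ℝ)+1) ^ 2 = k + 1 := sq_sqrt (by positivity)
  have h2 : √π ^ 2 = π := sq_sqrt pi_pos.le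
  rw [div_pow, mul_pow, mul_pow, h1, h2, V_sq]
  have := pi_pos
  field_simp

lemma vn_pos (k : ℕ) : 0 < vn k := by
  have := V_pos k
  unfold vn; positivity

lemma vn_bounds (k : ℕ) : 1 ≤ vn k ∧ vn k ^ 2 ≤ (2*k+2)/(2*k+1) := by
  have hp := pi_pos
  have h1 := Wallis.le_W k
  have h2 := Wallis.W_le k
  have hk : (0:ℝ) < 2*k+1 := by positivity
  have hk2 : (0:ℝ) < 2*k+2 := by positivity
  have e1 : (2*k+1)/(2*k+2) * (π/2) * (2/π) * ((2*(k:ℝ)+2)/(2*k+1)) = 1 := by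
    field_simp
  have e2 : (π/2) * (2/π) * ((2*(k:ℝ)+2)/(2*k+1)) = (2*k+2)/(2*k+1) := by
    field_simp
  constructor
  · have : 1 ≤ vn k ^ 2 := by
      rw [vn_sq]
      refine e1.symm.le.trans ?_
      gcongr
    nlinarith [vn_pos k]
  · rw [vn_sq]
    refine le_trans ?_ e2.le
    gcongr

lemma two_frac (k : ℕ) : (2*(k:ℝ)+2)/(2*k+1) = 1 + 1/(2*k+1) := by
  have hk : (0:ℝ) < 2*k+1 := by positivity
  field_simp; ring

lemma frac_le (k : ℕ) : 1/(2*(k:ℝ)+1) ≤ 1/(k+1) := by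
  apply one_div_le_one_div_of_le (by positivity)
  have : (0:ℝ) ≤ k := by positivity
  linarith

lemma vn_close (k : ℕ) : |vn k - 1| ≤ 1/((k:ℝ)+1) := by
  obtain ⟨h1, h2⟩ := vn_bounds k
  rw [two_frac] at h2
  have := le_of_sq_le h1 h2
  rw [abs_of_nonneg (by linarith)]
  linarith [frac_le k]

lemma central_mul_V (k : ℕ) : ((2*k).choose k : ℝ) / 4^k * V k = 1/(2*k+1) := by
  induction k with
  | zero => simp [V_zero]
  | succ k ih =>
    have h := Nat.succ_mul_centralBinom_succ k
    rw [Nat.centralBinom, Nat.centralBinom] at h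
    have h' : ((k:ℝ)+1) * ((2*(k+1)).choose (k+1) : ℝ) = 2 * (2*k+1) * ((2*k).choose k) := by
      exact_mod_cast h
    have h'' : ((2*(k+1)).choose (k+1) : ℝ) = 2 * (2*k+1) * ((2*k).choose k) / (k+1) := by
      field_simp; linarith
    rw [h'', V_succ]
    have e : 2 * (2*(k:ℝ)+1) * ((2*k).choose k) / (k+1) / 4^(k+1) * (V k * ((2*k+2)/(2*k+3)))
      = (((2*k).choose k : ℝ) / 4^k * V k) * ((2*k+1)/(2*k+3)) := by
      field_simp; ring
    rw [e, ih]
    push_cast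
    field_simp
    ring

/-- Normalised central binomial coefficient. -/
noncomputable def cb (k : ℕ) : ℝ := ((2*k).choose k : ℝ) / 4^k * (√π * √((k:ℝ)+1))

lemma cb_eq (k : ℕ) : cb k * vn k = (2*k+2)/(2*k+1) := by
  unfold cb vn
  have h1 : √((k:ℝ)+1) * √((k:ℝ)+1) = k + 1 := mul_self_sqrt (by positivity)
  have h2 : 0 < √π := by have := pi_pos; positivity
  have e : ((2*k).choose k : ℝ) / 4^k * (√π * √((k:ℝ)+1)) * (V k * √((k:ℝ)+1) * 2 / √π) =
    (((2*k).choose k : ℝ) / 4^k * V k) * (√((k:ℝ)+1) * √((k:ℝ)+1)) * 2 * (√π / √π) := by ring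
  rw [e, central_mul_V, h1, div_self h2.ne']
  ring

lemma cb_close (k : ℕ) : |cb k - 1| ≤ 1/((k:ℝ)+1) := by
  obtain ⟨h1, h2⟩ := vn_bounds k
  have h := cb_eq k
  have hv := vn_pos k
  have a1 : 1 ≤ cb k := by
    rw [← h] at h2
    have : vn k ≤ cb k := by nlinarith
    linarith
  have a2 : cb k ≤ (2*k+2)/(2*k+1) := by rw [← h]; nlinarith
  rw [two_frac] at a2
  rw [abs_of_nonneg (by linarith)]
  linarith [frac_le k]

/-- Normalised Motzkin prefix count. -/
noncomputable def eta (k : ℕ) : ℝ := H k 0 * (√π * √((k:ℝ)+1)) / (√3 * 3^k)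

lemma sq_le_three_pow (k : ℕ) : ((k:ℝ)+1)^2 ≤ 4 * 3^k := by
  induction k with
  | zero => norm_num
  | succ k ih =>
    push_cast
    rw [pow_succ (3:ℝ)]
    have : (0:ℝ) ≤ k := by positivity
    rcases k with _ | k
    · norm_num
    · push_cast at *
      nlinarith [sq_nonneg (k:ℝ), (by positivity : (0:ℝ) ≤ k)]

lemma eta_close (k : ℕ) : |eta k - 1| ≤ 18/((k:ℝ)+1) := by
  have hp := pi_pos
  have hp3 := pi_gt_three
  have hsp : 0 < √π := by positivity
  have hspp : √π * √π = π := mul_self_sqrt hp.le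
  have hk1 : (0:ℝ) < k + 1 := by positivity
  have hsk : 0 < √((k:ℝ)+1) := by positivity
  have h3 : 0 < √3 := by positivity
  have hb := H_bound k
  set c : ℝ := √((k:ℝ)+1) / (√π * √3 * 3^k) with hc
  have hcpos : 0 < c := by positivity
  have e1 : eta k = c * (H k 0 * π) := by
    rw [hc, eta]; field_simp; linear_combination (H k 0 : ℝ) * hspp
  have e2 : c * (2 * √3 * 3^k * V k) = vn k := by
    rw [hc, vn]; field_simp
  have e3 : |eta k - vn k| ≤ vn k / (2*k+3) + 4 * c := by
    rw [← e2, e1, ← mul_sub, abs_mul, abs_of_pos hcpos]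
    refine (mul_le_mul_of_nonneg_left hb hcpos.le).trans (le_of_eq ?_)
    ring
  have hv := vn_close k
  have hv2 : vn k ≤ 2 := by
    have := (abs_le.1 hv).2
    have : 1/((k:ℝ)+1) ≤ 1 := by
      rw [div_le_one hk1]; linarith [(by positivity : (0:ℝ) ≤ k)]
    linarith
  have e4 : vn k / (2*k+3) ≤ 1/((k:ℝ)+1) := by
    rw [div_le_div_iff₀ (by positivity) hk1]
    nlinarith
  have e5 : 4 * c ≤ 16 / ((k:ℝ)+1) := by
    have s1 : √((k:ℝ)+1) ≤ k + 1 := by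
      rw [sqrt_le_iff]; constructor
      · positivity
      · nlinarith [(by positivity : (0:ℝ) ≤ k)]
    have s2 : 1 ≤ √π * √3 := by
      rw [← sqrt_mul hp.le, one_le_sqrt]; nlinarith
    have s3 : (3:ℝ)^k ≤ √π * √3 * 3^k := by
      have : (0:ℝ) < 3^k := by positivity
      nlinarith
    have : c ≤ (k+1) / 3^k := by
      rw [hc]
      gcongr
    have s4 : ((k:ℝ)+1)/3^k ≤ 4 / (k+1) := by
      rw [div_le_div_iff₀ (by positivity) hk1]
      nlinarith [sq_le_three_pow k]
    calc 4 * c ≤ 4 * (4/((k:ℝ)+1)) := by linarith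
      _ = _ := by ring
  have : |eta k - 1| ≤ |eta k - vn k| + |vn k - 1| := abs_sub_le _ _ _
  have e6 : 18/((k:ℝ)+1) = 1/((k:ℝ)+1) + 16/((k:ℝ)+1) + 1/((k:ℝ)+1) := by ring
  linarith

lemma prod_close {a b A B e : ℝ} (ha : |a - 1| ≤ A * e) (hb : |b - 1| ≤ B * e)
    (hB : 0 ≤ B) (hA : 0 ≤ A) (he : 0 ≤ e) (he1 : e ≤ 1) :
    |a * b - 1| ≤ (A + B + A * B) * e := by
  have e0 : a * b - 1 = (a - 1) * (b - 1) + (a - 1) + (b - 1) := by ring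
  rw [e0]
  have h1 : |(a-1) * (b-1)| ≤ (A * e) * (B * e) := by
    rw [abs_mul]; gcongr
  have h2 : (A * e) * (B * e) ≤ A * B * e := by
    have : 0 ≤ A * B * e := by positivity
    nlinarith
  have := abs_add_three ((a-1) * (b-1)) (a-1) (b-1)
  nlinarith

lemma ratio_step (m p j : ℕ) (hj : j + 1 ≤ m) :
    ((2*m+p).choose (m-(j+1)) : ℝ) * (m+p+j+1) = (2*m+p).choose (m-j) * (m-j) := by
  obtain ⟨i, rfl⟩ : ∃ i, m = i + j + 1 := ⟨m - (j+1), by omega⟩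
  have e1 : i + j + 1 - (j+1) = i := by omega
  have e2 : i + j + 1 - j = i + 1 := by omega
  rw [e1, e2]
  have h := Nat.choose_succ_right_eq (2*(i+j+1)+p) i
  have e3 : 2*(i+j+1)+p - i = i + 2*j+2+p := by omega
  rw [e3] at h
  have h' : (((2*(i+j+1)+p).choose (i+1) : ℕ):ℝ) * (i+1) =
    ((2*(i+j+1)+p).choose i : ℕ) * (i + 2*j+2+p) := by exact_mod_cast h
  push_cast
  linear_combination -h'

lemma ratio_bounds (m p : ℕ) (hp : p ≤ 1) : ∀ j, j ≤ m →
    ((2*m+p).choose (m-j) : ℝ) / (2*m+p).choose m ≤ 1 ∧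
    1 - (j:ℝ)*(j+1)/(m+1) ≤ ((2*m+p).choose (m-j) : ℝ) / (2*m+p).choose m := by
  have hC : (0:ℝ) < (2*m+p).choose m := by exact_mod_cast Nat.choose_pos (by omega)
  intro j
  induction j with
  | zero => intro _; simp [hC.ne']
  | succ j ih =>
    intro hj
    obtain ⟨h1, h2⟩ := ih (by omega)
    have hs := ratio_step m p j hj
    have hjm : (j:ℝ) + 1 ≤ m := by exact_mod_cast hj
    have hp1 : (p:ℝ) ≤ 1 := by exact_mod_cast hp
    have hp0 : (0:ℝ) ≤ p := by positivity
    have hj0 : (0:ℝ) ≤ j := by positivity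
    have hd : (0:ℝ) < m+p+j+1 := by positivity
    set R := ((2*m+p).choose (m-j) : ℝ) / (2*m+p).choose m with hR
    have hR0 : 0 ≤ R := by positivity
    have e : ((2*m+p).choose (m-(j+1)) : ℝ) / (2*m+p).choose m = R * ((m-j)/(m+p+j+1)) := by
      rw [hR]
      field_simp
      linarith
    have f1 : ((m:ℝ)-j)/(m+p+j+1) ≤ 1 := by rw [div_le_one hd]; linarith
    have f2 : 1 - (2*(j:ℝ)+2)/(m+1) ≤ ((m:ℝ)-j)/(m+p+j+1) := by
      have : ((m:ℝ)-j)/(m+p+j+1) = 1 - (2*j+p+1)/(m+p+j+1) := by field_simp; ring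
      rw [this]
      have : (2*(j:ℝ)+p+1)/(m+p+j+1) ≤ (2*(j:ℝ)+2)/(m+1) := by
        apply div_le_div₀ <;> first | positivity | linarith
      linarith
    rw [e]
    constructor
    · have : 0 ≤ ((m:ℝ)-j)/(m+p+j+1) := div_nonneg (by linarith) hd.le
      nlinarith
    · push_cast
      have e2 : 1 - ((j:ℝ)+1)*(j+1+1)/(m+1) =
        (1 - (j:ℝ)*(j+1)/(m+1)) - (2*(j:ℝ)+2)/(m+1) := by field_simp; ring
      rw [e2]
      have hx : 0 ≤ (2*(j:ℝ)+2)/(m+1) := by positivity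
      nlinarith

/-- The relative correction factor of the `j`-th term. -/
noncomputable def X (m p j : ℕ) : ℝ :=
  (((m:ℝ)+1)/(m+p+j+1) * (((2*m+p).choose (m-j) : ℝ) / (2*m+p).choose m)) *
    ((√((m:ℝ)+1) / √(((m-j:ℕ):ℝ)+1)) * eta (m-j))

lemma X_close (m p j : ℕ) (hp : p ≤ 1) (hj : j ≤ m) :
    |X m p j - 1| ≤ 19^4 * ((j:ℝ)+1)^8 * (1/((m:ℝ)+1)) := by
  have hp1 : (p:ℝ) ≤ 1 := by exact_mod_cast hp
  have hp0 : (0:ℝ) ≤ p := by positivity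
  have hj0 : (0:ℝ) ≤ j := by positivity
  have hm0 : (0:ℝ) ≤ m := by positivity
  have hm : (0:ℝ) < m + 1 := by positivity
  have hjm : (j:ℝ) ≤ m := by exact_mod_cast hj
  have hcast : ((m-j:ℕ):ℝ) = m - j := Nat.cast_sub hj
  have hk : (0:ℝ) < m - j + 1 := by linarith
  set e : ℝ := 1/((m:ℝ)+1) with he
  have he0 : 0 ≤ e := by positivity
  have he1 : e ≤ 1 := by rw [he, div_le_one hm]; linarith
  set Q : ℝ := 18 * ((j:ℝ)+1)^2 with hQ
  have hQ0 : 0 ≤ Q := by positivity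
  have hinv : 1/((m:ℝ)-j+1) ≤ (j+1) * e := by
    rw [he, mul_one_div, div_le_div_iff₀ hk hm]
    nlinarith
  have b1 : |((m:ℝ)+1)/(m+p+j+1) - 1| ≤ Q * e := by
    have : ((m:ℝ)+1)/(m+p+j+1) - 1 = -((p+j)/(m+p+j+1)) := by field_simp; ring
    rw [this, abs_neg, abs_of_nonneg (by positivity)]
    have : ((p:ℝ)+j)/(m+p+j+1) ≤ (j+1)/(m+1) := by
      apply div_le_div₀ <;> first | positivity | linarith
    refine this.trans ?_
    rw [he, mul_one_div]
    gcongr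
    nlinarith
  have b2 : |((2*m+p).choose (m-j) : ℝ) / (2*m+p).choose m - 1| ≤ Q * e := by
    obtain ⟨h1, h2⟩ := ratio_bounds m p hp j hj
    rw [abs_of_nonpos (by linarith)]
    have : (j:ℝ)*(j+1)/(m+1) ≤ Q * e := by
      rw [he, mul_one_div]
      gcongr
      nlinarith
    linarith
  have b3 : |√((m:ℝ)+1) / √(((m-j:ℕ):ℝ)+1) - 1| ≤ Q * e := by
    rw [hcast, ← sqrt_div hm.le]
    have h0 : ((m:ℝ)+1)/(m-j+1) = 1 + j * (1/(m-j+1)) := by field_simp; ring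
    have h1 : 1 ≤ √(((m:ℝ)+1)/(m-j+1)) := by
      rw [one_le_sqrt, h0]
      have : 0 ≤ (j:ℝ) * (1/(m-j+1)) := by positivity
      linarith
    have h2 : √(((m:ℝ)+1)/(m-j+1)) ≤ 1 + j * (1/(m-j+1)) := by
      apply le_of_sq_le h1
      rw [sq_sqrt (by positivity), h0]
    rw [abs_of_nonneg (by linarith)]
    have h3 : (j:ℝ) * (1/(m-j+1)) ≤ j * ((j+1) * e) := by gcongr
    have h4 : (j:ℝ) * ((j+1) * e) ≤ Q * e := by
      rw [← mul_assoc]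
      gcongr
      nlinarith
    linarith
  have b4 : |eta (m-j) - 1| ≤ Q * e := by
    have := eta_close (m-j)
    rw [hcast] at this
    refine this.trans ?_
    calc 18/((m:ℝ)-j+1) = 18 * (1/((m:ℝ)-j+1)) := by ring
      _ ≤ 18 * ((j+1) * e) := by gcongr
      _ = (18 * (j+1)) * e := by ring
      _ ≤ Q * e := by
        gcongr
        nlinarith
  have c1 := prod_close b1 b2 hQ0 hQ0 he0 he1
  have c2 := prod_close b3 b4 hQ0 hQ0 he0 he1
  have hQ' : 0 ≤ Q + Q + Q * Q := by positivity
  have c3 := prod_close c1 c2 hQ' hQ' he0 he1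
  refine c3.trans ?_
  gcongr
  have hle : 1 + Q ≤ 19 * ((j:ℝ)+1)^2 := by rw [hQ]; nlinarith
  calc (Q + Q + Q * Q) + (Q + Q + Q * Q) + (Q + Q + Q * Q) * (Q + Q + Q * Q)
      = (1+Q)^4 - 1 := by ring
    _ ≤ (1+Q)^4 := by linarith
    _ ≤ (19 * ((j:ℝ)+1)^2)^4 := by gcongr
    _ = _ := by ring

lemma half_central (m p : ℕ) (hp : p ≤ 1) :
    |((2*m+p).choose m : ℝ) / 2^(2*m+p) * (√π * √((m:ℝ)+1)) - 1| ≤ 3 * (1/((m:ℝ)+1)) := by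
  have hm0 : (0:ℝ) ≤ m := by positivity
  have hm : (0:ℝ) < m + 1 := by positivity
  have he0 : 0 ≤ 1/((m:ℝ)+1) := by positivity
  have he1 : 1/((m:ℝ)+1) ≤ 1 := by rw [div_le_one hm]; linarith
  have h1 := cb_close m
  have h4 : (2:ℝ)^(2*m) = 4^m := by rw [pow_mul]; norm_num
  interval_cases p
  · simp only [add_zero]
    rw [h4]
    have : cb m = ((2*m).choose m : ℝ) / 4^m * (√π * √((m:ℝ)+1)) := rfl
    rw [← this]
    linarith
  · have e1 : ((2*m+1).choose m : ℝ) * (m+1) = (2*m+1) * (2*m).choose m := by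
      have a := Nat.add_one_mul_choose_eq (2*m) m
      rw [Nat.choose_symm_half] at a
      exact_mod_cast a.symm
    have e2 : ((2*m+1).choose m : ℝ) = (2*m+1) * (2*m).choose m / (m+1) := by
      field_simp; linarith
    have e3 : ((2*m+1).choose m : ℝ) / 2^(2*m+1) * (√π * √((m:ℝ)+1)) =
        cb m * ((2*m+1)/(2*m+2)) := by
      rw [e2, cb, pow_succ, h4]
      field_simp
    rw [e3]
    have h2 : |(2*(m:ℝ)+1)/(2*m+2) - 1| ≤ 1 * (1/((m:ℝ)+1)) := by
      have : (2*(m:ℝ)+1)/(2*m+2) - 1 = -(1/(2*m+2)) := by field_simp; ring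
      rw [this, abs_neg, abs_of_nonneg (by positivity), one_mul]
      apply one_div_le_one_div_of_le hm
      linarith
    have := prod_close (A := 1) (by rw [one_mul]; exact h1) h2 zero_le_one zero_le_one he0 he1
    linarith

/-- The prefactor. -/
noncomputable def F (m p : ℕ) : ℝ :=
  (((2*m+p:ℕ):ℝ) / (2*(m+1)) * (((2*m+p:ℕ):ℝ) / (2*(m+1)))) *
    (((2*m+p).choose m : ℝ) / 2^(2*m+p) * (√π * √((m:ℝ)+1)))

lemma F_close (m p : ℕ) (hp : p ≤ 1) : |F m p - 1| ≤ 15 * (1/((m:ℝ)+1)) := by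
  have hp1 : (p:ℝ) ≤ 1 := by exact_mod_cast hp
  have hp0 : (0:ℝ) ≤ p := by positivity
  have hm0 : (0:ℝ) ≤ m := by positivity
  have hm : (0:ℝ) < m + 1 := by positivity
  have he0 : 0 ≤ 1/((m:ℝ)+1) := by positivity
  have he1 : 1/((m:ℝ)+1) ≤ 1 := by rw [div_le_one hm]; linarith
  have h1 : |((2*m+p:ℕ):ℝ) / (2*(m+1)) - 1| ≤ 1 * (1/((m:ℝ)+1)) := by
    push_cast
    have : (2*(m:ℝ)+p)/(2*(m+1)) - 1 = -((2-p)/(2*(m+1))) := by field_simp; ring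
    rw [this, abs_neg, abs_of_nonneg (div_nonneg (by linarith) (by positivity)), one_mul,
      div_le_div_iff₀ (by positivity) hm]
    nlinarith
  have h2 := prod_close h1 h1 zero_le_one zero_le_one he0 he1
  have h3 := prod_close h2 (half_central m p hp) (by norm_num) (by norm_num) he0 he1
  have : |F m p - 1| ≤ _ := h3
  refine this.trans (le_of_eq ?_)
  ring

/-- Coefficients of the limiting series. -/
noncomputable def q (p j : ℕ) : ℝ := ((p:ℝ) + 2*j + 1) * (1/3)^j

lemma q_hasSum (p : ℕ) : HasSum (q p) (3/2 * p + 3) := by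
  have h1 : HasSum (fun j : ℕ => (1/3:ℝ)^j) (1 - 1/3)⁻¹ :=
    hasSum_geometric_of_lt_one (by norm_num) (by norm_num)
  have h2 : HasSum (fun j : ℕ => (j:ℝ) * (1/3:ℝ)^j) ((1/3) / (1 - 1/3)^2) :=
    hasSum_coe_mul_geometric_of_norm_lt_one (by rw [norm_eq_abs, abs_of_pos] <;> norm_num)
  have h3 := (h1.mul_left ((p:ℝ)+1)).add (h2.mul_left 2)
  convert! h3 using 1
  · funext j; unfold q; ring
  · norm_num; ring

lemma bound_summable :
    Summable (fun j : ℕ => 2 * ((j:ℝ)+1) * (1/3)^j * (19^4 * ((j:ℝ)+1)^8)) := by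
  have h := summable_pow_mul_geometric_of_norm_lt_one (R := ℝ) 9 (r := 1/3)
    (by rw [norm_eq_abs, abs_of_pos] <;> norm_num)
  have h2 := ((summable_nat_add_iff 1).2 h).mul_left (2 * 19^4 * 3)
  refine h2.congr fun j => ?_
  push_cast
  ring

lemma sum_close : ∃ C : ℝ, 0 ≤ C ∧ ∀ m p : ℕ, p ≤ 1 →
    |∑ j ∈ Finset.range (m+1), q p j * X m p j - (3/2 * p + 3)| ≤ C * (1/((m:ℝ)+1)) := by
  refine ⟨∑' j : ℕ, 2 * ((j:ℝ)+1) * (1/3)^j * (19^4 * ((j:ℝ)+1)^8),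
    tsum_nonneg fun j => by positivity, fun m p hp => ?_⟩
  set Y : ℕ → ℝ := fun j => if j < m+1 then X m p j else 0 with hY
  have hm : (0:ℝ) < m + 1 := by positivity
  have hp1 : (p:ℝ) ≤ 1 := by exact_mod_cast hp
  have h1 : HasSum (fun j => q p j * Y j) (∑ j ∈ Finset.range (m+1), q p j * X m p j) := by
    have : ∑ j ∈ Finset.range (m+1), q p j * X m p j =
        ∑ j ∈ Finset.range (m+1), q p j * Y j := by
      refine Finset.sum_congr rfl fun j hj => ?_
      simp only [hY, if_pos (Finset.mem_range.1 hj)]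
    rw [this]
    apply hasSum_sum_of_ne_finset_zero
    intro j hj
    simp only [Finset.mem_range] at hj
    simp only [hY, if_neg hj, mul_zero]
  have h2 := h1.sub (q_hasSum p)
  rw [← h2.tsum_eq, ← norm_eq_abs]
  refine tsum_of_norm_bounded (bound_summable.hasSum.mul_right (1/((m:ℝ)+1))) fun j => ?_
  have hj0 : (0:ℝ) ≤ j := by positivity
  have hq0 : 0 ≤ q p j := by unfold q; positivity
  have hq : q p j ≤ 2 * ((j:ℝ)+1) * (1/3)^j := by
    unfold q
    gcongr
    linarith
  have hYc : |Y j - 1| ≤ 19^4 * ((j:ℝ)+1)^8 * (1/((m:ℝ)+1)) := by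
    by_cases hj : j < m + 1
    · simp only [hY, if_pos hj]
      exact X_close m p j hp (by omega)
    · simp only [hY, if_neg hj]
      have hj' : (m:ℝ) + 1 ≤ j := by exact_mod_cast (by omega : m + 1 ≤ j)
      rw [mul_one_div, le_div_iff₀ hm]
      norm_num
      have : (1:ℝ) ≤ ((j:ℝ)+1)^7 := one_le_pow₀ (by linarith)
      have e : ((j:ℝ)+1)^8 = ((j:ℝ)+1)^7 * (j+1) := by ring
      rw [e]
      nlinarith
  have e : q p j * Y j - q p j = q p j * (Y j - 1) := by ring
  rw [e, norm_eq_abs, abs_mul, abs_of_nonneg hq0, mul_assoc _ (19^4 * ((j:ℝ)+1)^8)]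
  gcongr

lemma term_eq (m p j : ℕ) (hj : j ≤ m) :
    (((2*m+p:ℕ):ℝ) - 2 * ((m-j:ℕ):ℝ) + 1) / (((2*m+p:ℕ):ℝ) - ((m-j:ℕ):ℝ) + 1)
      * (2*m+p).choose (m-j) * H (m-j) 0 * (2 * √3) ^ (-((2*m+p:ℕ):ℤ)) * ((2*m+p:ℕ):ℝ)^2 =
    (4 * √3 / √3^p / π) * F m p * (q p j * X m p j) := by
  have hcast : ((m-j:ℕ):ℝ) = m - j := Nat.cast_sub hj
  have hC : (0:ℝ) < (2*m+p).choose m := by exact_mod_cast Nat.choose_pos (by omega)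
  have h3 : 0 < √3 := by positivity
  have h3s : √3 ^ 2 = (3:ℝ) := sq_sqrt (by norm_num)
  have hpi : √π * √π = π := mul_self_sqrt pi_pos.le
  have hsp : 0 < √π := by have := pi_pos; positivity
  have hm : (0:ℝ) < (m:ℝ) + 1 := by positivity
  have hsm : 0 < √((m:ℝ)+1) := by positivity
  have hsmm : √((m:ℝ)+1) * √((m:ℝ)+1) = m + 1 := mul_self_sqrt hm.le
  have hsk : 0 < √(((m-j:ℕ):ℝ)+1) := by positivity
  have hd : (0:ℝ) < m+p+j+1 := by positivity
  have n1 : ((2*m+p:ℕ):ℝ) - 2 * ((m-j:ℕ):ℝ) + 1 = p + 2*j + 1 := by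
    rw [hcast]; push_cast; ring
  have n2 : ((2*m+p:ℕ):ℝ) - ((m-j:ℕ):ℝ) + 1 = m+p+j+1 := by
    rw [hcast]; push_cast; ring
  have n3 : (2 * √3) ^ (-((2*m+p:ℕ):ℤ)) = 1 / (2^(2*m+p) * (3^(m-j) * 3^j * √3^p)) := by
    rw [zpow_neg, zpow_natCast, mul_pow, ← pow_add, Nat.sub_add_cancel hj,
      pow_add (√3), pow_mul, h3s, one_div]
  rw [n1, n2, n3]
  unfold F q X eta
  generalize √(((m-j:ℕ):ℝ)+1) = sk at *
  generalize (H (m-j) 0 : ℝ) = hh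
  generalize ((2*m+p).choose (m-j) : ℝ) = c1
  generalize ((2*m+p).choose m : ℝ) = c0 at *
  generalize ((2*m+p:ℕ):ℝ) = n
  generalize √((m:ℝ)+1) = sm at *
  generalize √π = sp at *
  rw [one_div_pow, ← hpi, ← hsmm]
  field_simp
  ring

lemma main_bound : ∃ C : ℝ, 0 ≤ C ∧ ∀ m p : ℕ, p ≤ 1 →
    |(walkCount 2 {![0, 1], ![1, -1], ![0, -1], ![-1, -1]} (2*m+p) : ℝ)
        * (2 * √3) ^ (-((2*m+p:ℕ):ℤ)) * ((2*m+p:ℕ):ℝ)^2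
      - (4 * √3 / √3^p / π) * (3/2 * p + 3)| ≤ C * (1/((m:ℝ)+1)) := by
  obtain ⟨C, hC, h⟩ := sum_close
  refine ⟨4 * √3 / π * (15 + C + 15 * C) * 5, by have := pi_pos; positivity, fun m p hp => ?_⟩
  have hp1 : (p:ℝ) ≤ 1 := by exact_mod_cast hp
  have hp0 : (0:ℝ) ≤ p := by positivity
  have hm : (0:ℝ) < m + 1 := by positivity
  have hm0 : (0:ℝ) ≤ m := by positivity
  have he0 : 0 ≤ 1/((m:ℝ)+1) := by positivity
  have he1 : 1/((m:ℝ)+1) ≤ 1 := by rw [div_le_one hm]; linarith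
  set K : ℝ := 3/2 * p + 3 with hK
  have hK0 : 0 < K := by positivity
  set S := ∑ j ∈ Finset.range (m+1), q p j * X m p j with hS
  have e : (walkCount 2 {![0, 1], ![1, -1], ![0, -1], ![-1, -1]} (2*m+p) : ℝ)
        * (2 * √3) ^ (-((2*m+p:ℕ):ℤ)) * ((2*m+p:ℕ):ℝ)^2 = (4 * √3 / √3^p / π) * F m p * S := by
    rw [walkCount_sum, show (2*m+p)/2 = m by omega, ← Finset.sum_range_reflect, Finset.sum_mul,
      Finset.sum_mul, hS, Finset.mul_sum]
    refine Finset.sum_congr rfl fun j hj => ?_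
    have hj' : j ≤ m := by simp at hj; omega
    rw [← term_eq m p j hj', show m + 1 - 1 - j = m - j by omega]
  rw [e]
  have hSK : |S / K - 1| ≤ C * (1/((m:ℝ)+1)) := by
    have : S / K - 1 = (S - K) / K := by field_simp
    rw [this, abs_div, abs_of_pos hK0, div_le_iff₀ hK0]
    have h1 := h m p hp
    have h2 : 0 ≤ C * (1/((m:ℝ)+1)) := by positivity
    have h3 : 1 ≤ K := by rw [hK]; linarith
    exact h1.trans (by nlinarith)
  have hprod := prod_close (F_close m p hp) hSK hC (by norm_num) he0 he1
  have e2 : (4 * √3 / √3^p / π) * F m p * S - (4 * √3 / √3^p / π) * K =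
      (4 * √3 / √3^p / π) * (F m p * (S / K) - 1) * K := by
    field_simp
  have hpp := pi_pos
  have hc0 : 0 ≤ 4 * √3 / √3^p / π := by positivity
  have hc1 : 4 * √3 / √3^p / π ≤ 4 * √3 / π := by
    gcongr
    apply div_le_self (by positivity)
    apply one_le_pow₀
    rw [one_le_sqrt]; norm_num
  rw [e2, abs_mul, abs_mul, abs_of_nonneg hc0, abs_of_pos hK0]
  calc 4 * √3 / √3^p / π * |F m p * (S / K) - 1| * K
      ≤ 4 * √3 / π * ((15 + C + 15 * C) * (1/((m:ℝ)+1))) * 5 := by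
        gcongr
        rw [hK]; linarith
    _ = _ := by ring

end WalkAux

theorem asymptotics_N_SE_S_SW :
    ∃ c : ℝ, 0 < c ∧ ∀ n : ℕ, 1 ≤ n →
      |(walkCount 2 {![0, 1], ![1, -1], ![0, -1], ![-1, -1]} n : ℝ)
          * (2 * Real.sqrt 3) ^ (-(n : ℤ)) * (n : ℝ) ^ 2
        - (if Even n then 12 * Real.sqrt 3 / Real.pi else 18 / Real.pi)|
      ≤ c / n := by
  obtain ⟨C, hC, h⟩ := WalkAux.main_bound
  refine ⟨2 * C + 1, by positivity, fun n hn => ?_⟩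
  have hn0 : (0:ℝ) < n := by exact_mod_cast hn
  have hfin : ∀ m : ℕ, n ≤ 2 * m + 1 → C * (1/((m:ℝ)+1)) ≤ (2 * C + 1) / n := by
    intro m hm
    have hm' : (n:ℝ) ≤ 2 * m + 1 := by exact_mod_cast hm
    have hm0 : (0:ℝ) ≤ m := by positivity
    rw [mul_one_div, div_le_div_iff₀ (by positivity) hn0]
    nlinarith
  rcases Nat.even_or_odd' n with ⟨m, hm | hm⟩
  · have hev : Even n := ⟨m, by omega⟩
    rw [if_pos hev]
    have h1 := h m 0 (by norm_num)
    rw [add_zero, ← hm] at h1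
    have e : 4 * Real.sqrt 3 / Real.sqrt 3 ^ 0 / Real.pi * (3/2 * ((0:ℕ):ℝ) + 3)
      = 12 * Real.sqrt 3 / Real.pi := by norm_num; ring
    rw [e] at h1
    exact h1.trans (hfin m (by omega))
  · have hodd : ¬ Even n := by rw [Nat.not_even_iff_odd]; exact ⟨m, hm⟩
    rw [if_neg hodd]
    have h1 := h m 1 le_rfl
    rw [← hm] at h1
    have h3 : Real.sqrt 3 ≠ 0 := by positivity
    have e : 4 * Real.sqrt 3 / Real.sqrt 3 ^ 1 / Real.pi * (3/2 * ((1:ℕ):ℝ) + 3)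
      = 18 / Real.pi := by
      rw [pow_one, mul_div_assoc, div_self h3]; norm_num; ring
    rw [e] at h1
    exact h1.trans (hfin m (by omega))
end

section
/- Let s_n be the number of walks of length n with steps in {(1,0),(1,−1),(−1,0),(−1,1)} (the model E, SE, W, NW), beginning at the origin and confined to ℕ². Then there is a constant c > 0 such that for all n ≥ 1, | s_n · 4^{−n} · n² − 8/π | ≤ c/n; that is, s_n = 4^n n^{−2}·(8/π) + O(4^n n^{−3}). -/
open Finset

/-- number of simple walks on ℤ from 0 to x -/
def gbP : ℕ → ℤ → ℤ
  | 0, x => if x = 0 then 1 else 0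
  | n + 1, x => gbP n (x - 1) + gbP n (x + 1)

theorem gbP_far (n : ℕ) : ∀ x : ℤ, ((n : ℤ) < x ∨ x < -(n : ℤ)) → gbP n x = 0 := by
  induction n with
  | zero => intro x hx; simp only [gbP]; rw [if_neg]; push_cast at hx; omega
  | succ n ih =>
    intro x hx
    push_cast at hx
    simp only [gbP]
    rw [ih _ (by omega), ih _ (by omega)]; rfl

theorem gbP_parity (n : ℕ) : ∀ x : ℤ, (x + n) % 2 = 1 → gbP n x = 0 := by
  induction n with
  | zero => intro x hx; simp only [gbP]; rw [if_neg]; push_cast at hx; omega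
  | succ n ih =>
    intro x hx
    push_cast at hx
    simp only [gbP]
    rw [ih _ (by omega), ih _ (by omega)]; rfl

theorem gbP_neg (n : ℕ) : ∀ x : ℤ, gbP n (-x) = gbP n x := by
  induction n with
  | zero => intro x; simp [gbP]
  | succ n ih =>
    intro x
    simp only [gbP]
    rw [← ih (x - 1), ← ih (x + 1), add_comm]
    congr 2 <;> ring

theorem gbP_choose (n : ℕ) : ∀ j : ℕ, gbP n (2 * j - n) = n.choose j := by
  induction n with
  | zero =>
    intro j
    simp only [gbP]
    cases j with
    | zero => simp
    | succ j => rw [if_neg (by push_cast; omega)]; simp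
  | succ n ih =>
    intro j
    simp only [gbP]
    cases j with
    | zero =>
      rw [gbP_far n _ (by right; push_cast; omega)]
      have := ih 0
      simp only [Nat.choose_zero_right] at this ⊢
      rw [← this, zero_add]
      congr 1; push_cast; ring
    | succ j =>
      rw [Nat.choose_succ_succ]
      push_cast
      rw [← ih j, ← ih (j + 1)]
      push_cast
      congr 2 <;> ring

/-- reflected kernel -/
def gbQ (n : ℕ) (s x : ℤ) : ℤ := gbP n (x - s) - gbP n (x + s)

theorem gbQ_succ (n : ℕ) (s x : ℤ) : gbQ (n + 1) s x = gbQ n (s - 1) x + gbQ n (s + 1) x := by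
  simp only [gbQ, gbP]
  rw [show x - s - 1 = x - (s + 1) by ring, show x - s + 1 = x - (s - 1) by ring,
    show x + s - 1 = x + (s - 1) by ring, show x + s + 1 = x + (s + 1) by ring]
  ring

def gbD (n : ℕ) (U V x y : ℤ) : ℤ := gbQ n U x * gbQ n V y - gbQ n V x * gbQ n U y

def gbF (N n : ℕ) (U V : ℤ) : ℤ :=
  ∑ r ∈ range N, ∑ d ∈ range N, gbD n U V (r + 1 + 2 * (d + 1)) (r + 1)

theorem gbF_succ (N n : ℕ) (U V : ℤ) : gbF N (n + 1) U V =
    gbF N n (U + 1) (V + 1) + gbF N n (U - 1) (V + 1) + gbF N n (U - 1) (V - 1)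
      + gbF N n (U + 1) (V - 1) := by
  simp only [gbF, ← Finset.sum_add_distrib]
  refine Finset.sum_congr rfl fun r _ => Finset.sum_congr rfl fun d _ => ?_
  simp only [gbD, gbQ_succ]
  ring

theorem gbF_zero_right (N n : ℕ) (U : ℤ) : gbF N n U 0 = 0 := by
  simp [gbF, gbD, gbQ]

theorem gbF_diag (N n : ℕ) (U : ℤ) : gbF N n U U = 0 := by
  simp only [gbF, gbD, sub_self, Finset.sum_const_zero]

theorem gbF_start (N : ℕ) (i j : ℕ) (h : i + 2 * j + 3 < N) :
    gbF N 0 (i + 2 * j + 3) (i + 1) = 1 := by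
  unfold gbF
  have key : ∀ r d : ℕ, gbD 0 (i + 2 * j + 3) (i + 1) (r + 1 + 2 * (d + 1)) (r + 1)
      = if r = i then (if d = j then 1 else 0) else 0 := by
    intro r d
    simp only [gbD, gbQ, gbP]
    by_cases hr : r = i
    · subst hr
      by_cases hd : d = j
      · subst hd
        rw [if_pos (by ring), if_neg (by omega), if_pos (by ring), if_neg (by omega),
          if_neg (by omega), if_neg (by omega), if_neg (by omega), if_neg (by omega)]
        simp
      · rw [if_neg (by omega), if_neg (by omega), if_pos (by ring), if_neg (by omega),
          if_neg (by omega), if_neg (by omega)]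
        simp [hd]
    · rw [if_neg (c := (r:ℤ) + 1 + 2 * (d + 1) + (i + 2 * j + 3) = 0) (by omega),
        if_neg (c := (r:ℤ) + 1 - (i + 1) = 0) (by omega),
        if_neg (c := (r:ℤ) + 1 + (i + 1) = 0) (by omega),
        if_neg (c := (r:ℤ) + 1 + 2 * (d + 1) + (i + 1) = 0) (by omega),
        if_neg (c := (r:ℤ) + 1 + (i + 2 * j + 3) = 0) (by omega)]
      simp only [hr, if_false]
      by_cases h1 : (r:ℤ) + 1 - (i + 2 * j + 3) = 0
      · rw [if_neg (c := (r:ℤ) + 1 + 2 * (d + 1) - (i + 1) = 0) (by omega)]; simp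
      · rw [if_neg h1]; simp
  simp only [key]
  rw [Finset.sum_eq_single i, Finset.sum_eq_single j]
  · simp
  · intro b _ hb; simp [hb]
  · intro hb; exact absurd (Finset.mem_range.2 (by omega)) hb
  · intro b _ hb; simp [hb]
  · intro hb; exact absurd (Finset.mem_range.2 (by omega)) hb

theorem gbQ1_sum (N n : ℕ) (V : ℤ) (hV : 0 ≤ V) (hN : n < N) :
    ∑ d ∈ range N, gbQ n 1 (V + 2 * (d + 1)) = gbP n (V + 1) := by
  have := Finset.sum_range_sub' (fun d : ℕ => gbP n (V + 1 + 2 * d)) N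
  rw [gbP_far n (V + 1 + 2 * N) (by left; omega)] at this
  simp only [Nat.cast_zero, mul_zero, add_zero, sub_zero] at this
  rw [← this]
  refine Finset.sum_congr rfl fun d _ => ?_
  simp only [gbQ]
  push_cast
  congr 2 <;> ring

theorem gbQ3_sum (N n : ℕ) (V : ℤ) (hV : 0 ≤ V) (hN : n < N) :
    ∑ d ∈ range N, gbQ n 3 (V + 2 * (d + 1)) = gbP n (V - 1) + gbP n (V + 1) + gbP n (V + 3) := by
  have := Finset.sum_range_sub' (fun d : ℕ => gbP n (V - 1 + 2 * d) + gbP n (V + 1 + 2 * d)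
    + gbP n (V + 3 + 2 * d)) N
  rw [gbP_far n (V + 1 + 2 * N) (by left; omega), gbP_far n (V - 1 + 2 * N) (by left; omega),
    gbP_far n (V + 3 + 2 * N) (by left; omega)] at this
  simp only [Nat.cast_zero, mul_zero, add_zero, sub_zero] at this
  rw [← this]
  refine Finset.sum_congr rfl fun d _ => ?_
  simp only [gbQ]
  push_cast
  rw [show V - 1 + 2 * ((d : ℤ) + 1) = V + 1 + 2 * d by ring,
    show V + 1 + 2 * ((d : ℤ) + 1) = V + 3 + 2 * d by ring,
    show V + 3 + 2 * ((d : ℤ) + 1) = V + 2 * (d + 1) + 3 by ring,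
    show V - 1 + 2 * (d : ℤ) = V + 2 * (d + 1) - 3 by ring]
  ring

theorem gbF_eval (N n : ℕ) (hN : n + 2 < N) : gbF N n 3 1 =
    gbP n 0 ^ 2 - gbP n 2 ^ 2 + (gbP n 1 ^ 2 - gbP n 3 * gbP n 1) := by
  have h1 : gbF N n 3 1 = ∑ r ∈ range N,
      ((fun r : ℕ => (gbP n r ^ 2 - gbP n (r + 2) * gbP n (r - 2)) +
        (gbP n (r + 1) ^ 2 - gbP n (r + 3) * gbP n (r - 1))) r -
      (fun r : ℕ => (gbP n r ^ 2 - gbP n (r + 2) * gbP n (r - 2)) +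
        (gbP n (r + 1) ^ 2 - gbP n (r + 3) * gbP n (r - 1))) (r + 1)) := by
    unfold gbF
    refine Finset.sum_congr rfl fun r _ => ?_
    simp only [gbD, Finset.sum_sub_distrib, ← Finset.sum_mul]
    rw [gbQ1_sum N n _ (by omega) (by omega), gbQ3_sum N n _ (by omega) (by omega)]
    simp only [gbQ]
    push_cast
    rw [show (r : ℤ) + 1 - 1 = r by ring, show (r : ℤ) + 1 + 1 = r + 2 by ring,
      show (r : ℤ) + 1 + 3 = r + 4 by ring, show (r : ℤ) + 1 - 3 = r - 2 by ring,
      show (r : ℤ) + 1 - 2 = r - 1 by ring, show (r : ℤ) + 1 + 2 = r + 3 by ring]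
    ring
  rw [h1, Finset.sum_range_sub']
  rw [gbP_far n (N : ℤ) (by left; omega), gbP_far n ((N : ℤ) + 1) (by left; omega),
    gbP_far n ((N : ℤ) + 2) (by left; omega), gbP_far n ((N : ℤ) + 3) (by left; omega)]
  have e1 := gbP_neg n 1
  have e2 := gbP_neg n 2
  simp only [Nat.cast_zero, zero_add, zero_sub, e1, e2]
  ring

/-! Walks -/

abbrev gbS : Set (Fin 2 → ℤ) := {![1, 0], ![1, -1], ![-1, 0], ![-1, 1]}

def gbOK (n : ℕ) (x : Fin 2 → ℤ) (u : Fin n → (Fin 2 → ℤ)) : Prop :=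
  (∀ k : Fin n, u k ∈ gbS) ∧
    ∀ k : Fin n, ∀ m : Fin 2, 0 ≤ x m + ∑ j ∈ Finset.Iic k, u j m

theorem gb_sum_Iic {n : ℕ} (s : ℤ) (u : Fin n → ℤ) (k : Fin n) :
    ∑ j ∈ Finset.Iic k.succ, (Fin.cons s u : Fin (n + 1) → ℤ) j = s + ∑ j ∈ Finset.Iic k, u j := by
  have h : ∀ (m : ℕ) (k : Fin m), Finset.Iic k = Finset.univ.filter (· ≤ k) := by
    intro m k; ext; simp
  rw [h, h, Finset.sum_filter, Finset.sum_filter, Fin.sum_univ_succ]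
  simp

theorem gbOK_cons (n : ℕ) (x s : Fin 2 → ℤ) (u : Fin n → (Fin 2 → ℤ)) :
    gbOK (n + 1) x (Fin.cons s u) ↔ (s ∈ gbS ∧ ∀ m, 0 ≤ (x + s) m) ∧ gbOK n (x + s) u := by
  unfold gbOK
  rw [Fin.forall_fin_succ, Fin.forall_fin_succ (P := fun k => ∀ m : Fin 2, _)]
  have hz : ∀ m, ∑ j ∈ Finset.Iic (0 : Fin (n + 1)), (Fin.cons s u : Fin (n+1) → Fin 2 → ℤ) j m
      = s m := by
    intro m
    have : Finset.Iic (0 : Fin (n + 1)) = {0} := by ext; simp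
    rw [this]; simp
  have hs : ∀ k : Fin n, ∀ m, ∑ j ∈ Finset.Iic k.succ, (Fin.cons s u : Fin (n+1) → Fin 2 → ℤ) j m
      = s m + ∑ j ∈ Finset.Iic k, u j m := by
    intro k m
    rw [← gb_sum_Iic]
    refine Finset.sum_congr rfl fun j _ => ?_
    refine Fin.cases ?_ (fun j => ?_) j <;> simp
  simp only [hz, hs, Fin.cons_zero, Fin.cons_succ, Pi.add_apply, add_assoc]
  tauto

instance gbS_finite : Finite gbS := by
  unfold gbS; exact Set.Finite.to_subtype (by simp)

instance gb_fin (n : ℕ) (x : Fin 2 → ℤ) : Finite {u // gbOK n x u} := by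
  refine Finite.of_injective (β := Fin n → gbS) (fun u k => ⟨u.1 k, u.2.1 k⟩) ?_
  intro u v h
  ext k : 2
  have := congrFun h k
  exact congrArg Subtype.val this

def gbEquiv (n : ℕ) (x : Fin 2 → ℤ) : {u // gbOK (n + 1) x u} ≃
    Σ s : gbS, {u // (∀ m, 0 ≤ (x + s.1) m) ∧ gbOK n (x + s.1) u} where
  toFun u := by
    have h := u.2
    rw [← Fin.cons_self_tail u.1, gbOK_cons] at h
    exact ⟨⟨u.1 0, h.1.1⟩, ⟨Fin.tail u.1, h.1.2, h.2⟩⟩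
  invFun p := ⟨Fin.cons p.1.1 p.2.1, (gbOK_cons _ _ _ _).2 ⟨⟨p.1.2, p.2.2.1⟩, p.2.2.2⟩⟩
  left_inv u := by
    apply Subtype.ext
    exact Fin.cons_self_tail u.1
  right_inv p := by
    rcases p with ⟨⟨s, hs⟩, ⟨u, hu⟩⟩
    rfl

/-- walks from (i,j), zero outside of the quadrant -/
noncomputable def gbK (n : ℕ) (x : Fin 2 → ℤ) : ℕ :=
  Nat.card {u // (∀ m, 0 ≤ x m) ∧ gbOK n x u}

theorem gbK_out (n : ℕ) (x : Fin 2 → ℤ) (h : ¬ ∀ m, 0 ≤ x m) : gbK n x = 0 := by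
  unfold gbK
  have : IsEmpty {u // (∀ m, 0 ≤ x m) ∧ gbOK n x u} := ⟨fun u => h u.2.1⟩
  exact Nat.card_of_isEmpty

theorem gbK_in (n : ℕ) (x : Fin 2 → ℤ) (h : ∀ m, 0 ≤ x m) :
    gbK n x = Nat.card {u // gbOK n x u} := by
  unfold gbK
  exact Nat.card_congr (Equiv.subtypeEquivRight fun u => by simp [h])

theorem gbK_zero (x : Fin 2 → ℤ) (h : ∀ m, 0 ≤ x m) : gbK 0 x = 1 := by
  rw [gbK_in _ _ h, Nat.card_eq_one_iff_unique]
  refine ⟨⟨fun a b => Subtype.ext (Subsingleton.elim _ _)⟩, ⟨⟨fun k => k.elim0, ?_⟩⟩⟩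
  exact ⟨fun k => k.elim0, fun k => k.elim0⟩

theorem gbK_succ (n : ℕ) (x : Fin 2 → ℤ) (h : ∀ m, 0 ≤ x m) :
    gbK (n + 1) x = gbK n (x + ![1, 0]) + gbK n (x + ![1, -1]) + gbK n (x + ![-1, 0])
      + gbK n (x + ![-1, 1]) := by
  rw [gbK_in _ _ h, Nat.card_congr (gbEquiv n x)]
  have : ∀ s : gbS, Finite {u // (∀ m, 0 ≤ (x + s.1) m) ∧ gbOK n (x + s.1) u} := fun s =>
    Finite.of_injective (β := {u // gbOK n (x + s.1) u}) (fun u => ⟨u.1, u.2.2⟩)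
      (fun u v h => Subtype.ext (Subtype.mk.inj h))
  let _ : Fintype gbS := Fintype.ofFinite _
  rw [Nat.card_sigma]
  change ∑ s : gbS, gbK n (x + s.1) = _
  have hS : ∀ y : Fin 2 → ℤ, y ∈ ({![1, 0], ![1, -1], ![-1, 0], ![-1, 1]} : Finset (Fin 2 → ℤ))
      ↔ y ∈ gbS := by intro y; simp [gbS]
  rw [← Finset.sum_subtype _ hS (fun s => gbK n (x + s))]
  rw [Finset.sum_insert (by decide), Finset.sum_insert (by decide), Finset.sum_insert (by decide),
    Finset.sum_singleton]
  ring

theorem gbK_eq (N n : ℕ) : ∀ i j : ℤ, -1 ≤ i → -1 ≤ j → i + 2 * j + 3 + n < N →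
    (gbK n ![i, j] : ℤ) = gbF N n (i + 2 * j + 3) (i + 1) := by
  have out : ∀ n : ℕ, ∀ i j : ℤ, (i = -1 ∨ j = -1) →
      (gbK n ![i, j] : ℤ) = gbF N n (i + 2 * j + 3) (i + 1) := by
    intro n i j hij
    rw [gbK_out]
    · rcases hij with rfl | rfl
      · rw [show (-1 : ℤ) + 1 = 0 by norm_num, gbF_zero_right]; rfl
      · rw [show i + 2 * (-1 : ℤ) + 3 = i + 1 by ring, gbF_diag]; rfl
    · rw [Fin.forall_fin_two]
      simp only [Matrix.cons_val_zero, Matrix.cons_val_one]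
      omega
  have nn : ∀ i j : ℤ, 0 ≤ i → 0 ≤ j → ∀ m, 0 ≤ ![i, j] m := by
    intro i j hi hj
    rw [Fin.forall_fin_two]
    exact ⟨hi, hj⟩
  induction n with
  | zero =>
    intro i j hi hj h
    by_cases hij : i = -1 ∨ j = -1
    · exact out _ _ _ hij
    · rw [gbK_zero _ (nn i j (by omega) (by omega))]
      lift i to ℕ using by omega
      lift j to ℕ using by omega
      rw [gbF_start N i j (by push_cast at h; omega)]
      rfl
  | succ n ih =>
    intro i j hi hj h
    push_cast at h
    by_cases hij : i = -1 ∨ j = -1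
    · exact out _ _ _ hij
    · rw [gbK_succ _ _ (nn i j (by omega) (by omega)), gbF_succ]
      simp only [Matrix.cons_add_cons, Matrix.empty_add_empty, add_zero]
      push_cast
      rw [ih _ _ (by omega) (by omega) (by omega), ih _ _ (by omega) (by omega) (by omega),
        ih _ _ (by omega) (by omega) (by omega), ih _ _ (by omega) (by omega) (by omega)]
      ring_nf

theorem gb_walkCount (n : ℕ) :
    (walkCount 2 {![1, 0], ![1, -1], ![-1, 0], ![-1, 1]} n : ℤ) =
    gbP n 0 ^ 2 - gbP n 2 ^ 2 + (gbP n 1 ^ 2 - gbP n 3 * gbP n 1) := by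
  have h : walkCount 2 {![1, 0], ![1, -1], ![-1, 0], ![-1, 1]} n = gbK n ![0, 0] := by
    rw [gbK_in _ _ (by decide)]
    unfold walkCount
    refine Nat.card_congr (Equiv.subtypeEquivRight fun u => ?_)
    unfold gbOK
    have : ∀ m : Fin 2, (![0, 0] : Fin 2 → ℤ) m = 0 := by decide
    simp only [this, zero_add]
  rw [h, gbK_eq (n + 4) n 0 0 (by omega) (by omega) (by push_cast; omega)]
  exact gbF_eval (n + 4) n (by omega)

theorem gb_wallis (k : ℕ) : (Nat.centralBinom k : ℝ) ^ 2 * (Real.Wallis.W k * (2 * k + 1)) =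
    16 ^ k := by
  rw [Real.Wallis.W_eq_factorial_ratio]
  have h := Nat.choose_mul_factorial_mul_factorial (show k ≤ 2 * k by omega)
  have h' : (Nat.centralBinom k : ℝ) * (k.factorial) ^ 2 = (2 * k).factorial := by
    rw [← h, Nat.centralBinom, show 2 * k - k = k by omega]; push_cast; ring
  rw [← h', pow_mul]
  have : (Nat.centralBinom k : ℝ) ≠ 0 := by exact_mod_cast Nat.centralBinom_ne_zero k
  have : (k.factorial : ℝ) ≠ 0 := by exact_mod_cast Nat.factorial_ne_zero k
  field_simp
  norm_num

theorem gb_even (k : ℕ) :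
    (walkCount 2 {![1, 0], ![1, -1], ![-1, 0], ![-1, 1]} (2 * k) : ℝ)
      * (Real.Wallis.W k * (k + 1) ^ 2) = 16 ^ k := by
  have h := gb_walkCount (2 * k)
  rw [gbP_parity (2 * k) 1 (by push_cast; omega)] at h
  have h0 := gbP_choose (2 * k) k
  have h2 := gbP_choose (2 * k) (k + 1)
  rw [show 2 * (k : ℤ) - (2 * k : ℕ) = 0 by push_cast; ring] at h0
  rw [show 2 * ((k + 1 : ℕ) : ℤ) - (2 * k : ℕ) = 2 by push_cast; ring] at h2
  rw [h0, h2] at h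
  have h3 := Nat.choose_succ_right_eq (2 * k) k
  rw [show 2 * k - k = k by omega] at h3
  have h' : (walkCount 2 {![1, 0], ![1, -1], ![-1, 0], ![-1, 1]} (2 * k) : ℝ)
      = (Nat.centralBinom k : ℝ) ^ 2 - ((2 * k).choose (k + 1) : ℝ) ^ 2 := by
    rw [Nat.centralBinom]
    have := congrArg (Int.cast : ℤ → ℝ) h
    push_cast at this
    rw [this]; ring
  have h3' : ((2 * k).choose (k + 1) : ℝ) * (k + 1) = Nat.centralBinom k * k := by
    rw [Nat.centralBinom]; exact_mod_cast h3
  rw [h', ← gb_wallis k]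
  linear_combination (-Real.Wallis.W k) * (((2 * k).choose (k + 1) : ℝ) * (k + 1)
    + Nat.centralBinom k * k) * h3'

theorem gb_odd (k : ℕ) :
    (walkCount 2 {![1, 0], ![1, -1], ![-1, 0], ![-1, 1]} (2 * k + 1) : ℝ)
      * (Real.Wallis.W (k + 1) * (2 * k + 3) * (2 * k + 4)) = 16 ^ (k + 1) := by
  have h := gb_walkCount (2 * k + 1)
  rw [gbP_parity (2 * k + 1) 0 (by push_cast; omega),
    gbP_parity (2 * k + 1) 2 (by push_cast; omega)] at h
  have h0 := gbP_choose (2 * k + 1) (k + 1)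
  have h2 := gbP_choose (2 * k + 1) (k + 2)
  rw [show 2 * ((k + 1 : ℕ) : ℤ) - (2 * k + 1 : ℕ) = 1 by push_cast; ring] at h0
  rw [show 2 * ((k + 2 : ℕ) : ℤ) - (2 * k + 1 : ℕ) = 3 by push_cast; ring] at h2
  rw [h0, h2] at h
  have h3 := Nat.choose_succ_right_eq (2 * k + 1) (k + 1)
  rw [show 2 * k + 1 - (k + 1) = k by omega] at h3
  have h4 : Nat.centralBinom (k + 1) = 2 * (2 * k + 1).choose (k + 1) := by
    rw [Nat.centralBinom, show 2 * (k + 1) = (2 * k + 1) + 1 by ring, Nat.choose_succ_succ,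
      Nat.choose_symm_half]; ring
  have h' : (walkCount 2 {![1, 0], ![1, -1], ![-1, 0], ![-1, 1]} (2 * k + 1) : ℝ)
      = ((2 * k + 1).choose (k + 1) : ℝ) ^ 2
        - ((2 * k + 1).choose (k + 2) : ℝ) * ((2 * k + 1).choose (k + 1) : ℝ) := by
    have := congrArg (Int.cast : ℤ → ℝ) h
    push_cast at this
    rw [this]; ring
  have h3' : ((2 * k + 1).choose (k + 2) : ℝ) * (k + 2) = (2 * k + 1).choose (k + 1) * k := by
    have : ((2 * k + 1).choose (k + 1 + 1) : ℝ) * ((k + 1 : ℕ) + 1)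
      = (2 * k + 1).choose (k + 1) * k := by exact_mod_cast h3
    rw [← this]; push_cast; ring
  rw [h', ← gb_wallis (k + 1), h4]
  push_cast
  linear_combination (-2 * Real.Wallis.W (k + 1)) * (2 * k + 3)
    * ((2 * k + 1).choose (k + 1) : ℝ) * h3'

theorem gb_bound (X w n : ℝ) (hw : 1 ≤ w) (hn : 1 ≤ n) (h1 : X * w ≤ 4)
    (h2 : 4 * (n - 5) ≤ X * w * n) : |X - 4 / w| ≤ 20 / n := by
  have hw0 : 0 < w := by linarith
  have hn0 : 0 < n := by linarith
  have e : X - 4 / w = (X * w - 4) / w := by field_simp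
  rw [e, abs_div, abs_of_pos hw0, abs_of_nonpos (by linarith), div_le_div_iff₀ hw0 hn0]
  nlinarith

theorem asymptotics_E_SE_W_NW :
    ∃ c : ℝ, 0 < c ∧ ∀ n : ℕ, 1 ≤ n →
      |(walkCount 2 {![1, 0], ![1, -1], ![-1, 0], ![-1, 1]} n : ℝ)
          * (4 : ℝ) ^ (-(n : ℤ)) * (n : ℝ) ^ 2
        - 8 / Real.pi|
      ≤ c / n := by
  refine ⟨20, by norm_num, fun n hn => ?_⟩
  have hpi : (1 : ℝ) ≤ Real.pi / 2 := by linarith [Real.pi_gt_three]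
  rw [show 8 / Real.pi = 4 / (Real.pi / 2) by field_simp; norm_num]
  rw [zpow_neg, zpow_natCast]
  obtain ⟨k, rfl | rfl⟩ := Nat.even_or_odd' n
  · have h := gb_even k
    have hk : (1 : ℝ) ≤ k := by
      have : 1 ≤ k := by omega
      exact_mod_cast this
    have hW := Real.Wallis.W_pos k
    have hle := Real.Wallis.W_le k
    have hge := Real.Wallis.le_W k
    rw [← eq_div_iff (by positivity)] at h
    rw [h, pow_mul]
    generalize Real.Wallis.W k = W at *
    generalize Real.pi / 2 = w at *
    norm_num only
    push_cast
    have hr1 : 1 ≤ w / W := by rw [le_div_iff₀ hW]; linarith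
    have hr2 : w / W ≤ (2 * k + 2) / (2 * k + 1) := by
      rw [div_mul_eq_mul_div, div_le_iff₀ (by positivity)] at hge
      rw [div_le_div_iff₀ hW (by positivity)]; linarith
    have e : (16 : ℝ) ^ k / (W * (k + 1) ^ 2) * (16 ^ k)⁻¹ * (2 * k) ^ 2 * w
        = 4 * k ^ 2 / (k + 1) ^ 2 * (w / W) := by field_simp; try norm_num
    apply gb_bound _ _ _ hpi (by linarith)
    · rw [e]
      calc 4 * (k : ℝ) ^ 2 / (k + 1) ^ 2 * (w / W)
          ≤ 4 * k ^ 2 / (k + 1) ^ 2 * ((2 * k + 2) / (2 * k + 1)) := by gcongr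
        _ ≤ 4 := by
          rw [div_mul_div_comm, div_le_iff₀ (by positivity)]
          nlinarith [pow_pos (show (0 : ℝ) < k by linarith) 2]
    · rw [e]
      calc 4 * (2 * (k : ℝ) - 5) ≤ 4 * k ^ 2 / (k + 1) ^ 2 * 1 * (2 * k) := by
            rw [mul_one, div_mul_eq_mul_div, le_div_iff₀ (by positivity)]
            nlinarith [pow_pos (show (0 : ℝ) < k by linarith) 2]
        _ ≤ _ := by gcongr
  · have h := gb_odd k
    have hk : (0 : ℝ) ≤ k := by positivity
    have hW := Real.Wallis.W_pos (k + 1)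
    have hle := Real.Wallis.W_le (k + 1)
    have hge := Real.Wallis.le_W (k + 1)
    rw [← eq_div_iff (by positivity)] at h
    rw [h, pow_succ 4, pow_mul]
    generalize Real.Wallis.W (k + 1) = W at *
    generalize Real.pi / 2 = w at *
    norm_num only
    push_cast at hge ⊢
    have hr1 : 1 ≤ w / W := by rw [le_div_iff₀ hW]; linarith
    have hr2 : w / W ≤ (2 * k + 4) / (2 * k + 3) := by
      rw [div_mul_eq_mul_div, div_le_iff₀ (by positivity)] at hge
      rw [div_le_div_iff₀ hW (by positivity)]; linarith
    have e : (16 : ℝ) ^ (k + 1) / (W * (2 * k + 3) * (2 * k + 4)) * (16 ^ k * 4)⁻¹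
        * (2 * k + 1) ^ 2 * w
        = 4 * (2 * k + 1) ^ 2 / ((2 * k + 3) * (2 * k + 4)) * (w / W) := by
      rw [pow_succ]
      field_simp
      try norm_num
    apply gb_bound _ _ _ hpi (by linarith)
    · rw [e]
      calc 4 * (2 * (k : ℝ) + 1) ^ 2 / ((2 * k + 3) * (2 * k + 4)) * (w / W)
          ≤ 4 * (2 * (k : ℝ) + 1) ^ 2 / ((2 * k + 3) * (2 * k + 4))
            * ((2 * k + 4) / (2 * k + 3)) := by gcongr
        _ ≤ 4 := by
          rw [div_mul_div_comm, div_le_iff₀ (by positivity)]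
          nlinarith [pow_nonneg hk 2, pow_nonneg hk 3]
    · rw [e]
      calc 4 * (2 * (k : ℝ) + 1 - 5)
          ≤ 4 * (2 * (k : ℝ) + 1) ^ 2 / ((2 * k + 3) * (2 * k + 4)) * 1 * (2 * k + 1) := by
            rw [mul_one, div_mul_eq_mul_div, le_div_iff₀ (by positivity)]
            nlinarith [pow_nonneg hk 2, pow_nonneg hk 3]
        _ ≤ _ := by gcongr
end
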